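/- arXiv:2007.12111 — 2 statements merged into one kernel-verified Lean document; each statement's English description precedes it below -/
import Mathlib

section
/- Let ε > 0 and let p : ℕ → [0,1] be a function satisfying n·p(n) − log n − log log n → ∞ and n·p(n) − log n − log log n = o(log log n) as n → ∞. Then with high probability the random graph G ~ G(n, p(n)) satisfies the following: for every vertex set W ⊆ V(G) with |W| ≥ 0.1·n such that every v ∈ W has at least min{d_G(v), ε·log n} neighbours inside W, and for every w ∈ W, there exists a set Y ⊆ W with |Y| ≥ n/40 such that for each y ∈ Y the induced subgraph G[W] contains a Hamilton path whose endpoints are w and y. -/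
open scoped Classical in
/-- The probability, under the binomial random graph `G(n,p)`, that a graph
property `P` holds. Each of the `n.choose 2` possible edges is present
independently with probability `p`. -/
noncomputable def gnpProb (n : ℕ) (p : ℝ) (P : SimpleGraph (Fin n) → Prop) : ℝ :=
  ∑ G : SimpleGraph (Fin n),
    (if P G then p ^ G.edgeSet.ncard * (1 - p) ^ (n.choose 2 - G.edgeSet.ncard) else 0)

namespace HP

section Prob
open scoped Classical
open Finset

/-- weight of a graph -/
noncomputable def wt (n : ℕ) (p : ℝ) (G : SimpleGraph (Fin n)) : ℝ :=
  p ^ G.edgeSet.ncard * (1 - p) ^ (n.choose 2 - G.edgeSet.ncard)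

/-- all possible edges -/
noncomputable def EE (n : ℕ) : Finset (Sym2 (Fin n)) := univ.filter (fun e => ¬ e.IsDiag)

/-- edge set as finset -/
noncomputable def ES {V : Type*} [Fintype V] (G : SimpleGraph V) : Finset (Sym2 V) :=
  univ.filter (fun e => e ∈ G.edgeSet)

lemma mem_ES {V : Type*} [Fintype V] {G : SimpleGraph V} {e : Sym2 V} :
    e ∈ ES G ↔ e ∈ G.edgeSet := by simp [ES]

lemma mem_EE {n : ℕ} {e : Sym2 (Fin n)} : e ∈ EE n ↔ ¬ e.IsDiag := by simp [EE]

lemma card_EE (n : ℕ) : (EE n).card = n.choose 2 := by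
  have := Sym2.card_subtype_not_diag (α := Fin n)
  rw [Fintype.card_fin, Fintype.card_subtype] at this
  rw [← this, EE]

lemma ES_sub {n : ℕ} (G : SimpleGraph (Fin n)) : ES G ⊆ EE n := by
  intro e he
  rw [mem_EE]; rw [mem_ES] at he
  exact G.not_isDiag_of_mem_edgeSet he

lemma ncard_ES {n : ℕ} (G : SimpleGraph (Fin n)) : G.edgeSet.ncard = (ES G).card := by
  rw [← Set.ncard_coe_finset]; congr 1; ext e; simp [ES]

lemma sum_graph {n : ℕ} (f : Finset (Sym2 (Fin n)) → ℝ) :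
    ∑ G : SimpleGraph (Fin n), f (ES G) = ∑ T ∈ (EE n).powerset, f T := by
  refine Finset.sum_bij' (fun G _ => ES G)
    (fun T _ => SimpleGraph.fromEdgeSet (T : Set (Sym2 (Fin n)))) ?_ ?_ ?_ ?_ ?_
  · intro G _; exact mem_powerset.2 (ES_sub G)
  · intro T _; exact mem_univ _
  · intro G _
    have : ((ES G : Finset _) : Set (Sym2 (Fin n))) = G.edgeSet := by ext e; simp [ES]
    simp only [this]
    exact SimpleGraph.fromEdgeSet_edgeSet G
  · intro T hT
    ext e
    rw [mem_ES, SimpleGraph.edgeSet_fromEdgeSet]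
    have := mem_powerset.1 hT
    constructor
    · intro h; exact h.1
    · intro h; exact ⟨h, by have := this h; rw [mem_EE] at this; exact this⟩
  · intro G _; rfl

lemma master {n : ℕ} (p z : ℝ) (A B : Finset (Sym2 (Fin n))) (hA : A ⊆ EE n) (hB : B ⊆ EE n)
    (hAB : Disjoint A B) :
    ∑ G : SimpleGraph (Fin n), wt n p G * (if A ⊆ ES G then z ^ ((ES G ∩ B).card) else 0)
      = p ^ A.card * (1 - p + p * z) ^ B.card := by
  have h1 : ∀ G : SimpleGraph (Fin n), wt n p G *
      (if A ⊆ ES G then z ^ ((ES G ∩ B).card) else 0) =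
      (fun T : Finset (Sym2 (Fin n)) => (∏ e ∈ T, p * (if e ∈ B then z else 1)) *
        ∏ e ∈ EE n \ T, (1 - p) * (if e ∈ A then 0 else 1)) (ES G) := by
    intro G
    simp only [wt, ncard_ES, prod_mul_distrib, prod_const, card_sdiff_of_subset (ES_sub G), card_EE]
    have h2 : (∏ e ∈ ES G, (if e ∈ B then z else 1)) = z ^ ((ES G ∩ B).card) := by
      rw [prod_ite, prod_const, prod_const_one, mul_one, filter_mem_eq_inter]
    have h3 : (∏ e ∈ EE n \ ES G, (if e ∈ A then (0:ℝ) else 1)) = if A ⊆ ES G then 1 else 0 := by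
      split_ifs with h
      · apply prod_eq_one
        intro e he
        rw [if_neg]; intro hea
        exact (mem_sdiff.1 he).2 (h hea)
      · obtain ⟨e, he, he'⟩ := not_subset.1 h
        exact prod_eq_zero (mem_sdiff.2 ⟨hA he, he'⟩) (if_pos he)
    rw [h2, h3]
    split_ifs <;> ring
  have hs := sum_graph (n := n) (fun T : Finset (Sym2 (Fin n)) =>
    (∏ e ∈ T, p * (if e ∈ B then z else 1)) *
        ∏ e ∈ EE n \ T, (1 - p) * (if e ∈ A then 0 else 1))
  rw [sum_congr rfl (fun G _ => h1 G)]
  refine hs.trans ?_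
  rw [← prod_add]
  have h4 : ∀ e ∈ EE n, (p * (if e ∈ B then z else 1) + (1 - p) * (if e ∈ A then 0 else 1))
      = (if e ∈ A then p else 1) * (if e ∈ B then (1 - p + p * z) else 1) := by
    intro e _
    by_cases ha : e ∈ A
    · have : e ∉ B := fun hb => (disjoint_left.1 hAB) ha hb
      simp [ha, this]
    · by_cases hb : e ∈ B <;> simp [ha, hb]; ring
  rw [prod_congr rfl h4, prod_mul_distrib, prod_ite, prod_ite]
  simp only [prod_const, one_pow, mul_one]
  rw [filter_mem_eq_inter, filter_mem_eq_inter, inter_eq_right.2 hA, inter_eq_right.2 hB]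

lemma wt_nonneg {n : ℕ} {p : ℝ} (h0 : 0 ≤ p) (h1 : p ≤ 1) (G : SimpleGraph (Fin n)) :
    0 ≤ wt n p G := by
  have : 0 ≤ 1 - p := by linarith
  unfold wt; positivity

lemma gnp_eq {n : ℕ} (p : ℝ) (P : SimpleGraph (Fin n) → Prop) :
    gnpProb n p P = ∑ G : SimpleGraph (Fin n), if P G then wt n p G else 0 := rfl

lemma tail {n : ℕ} {p : ℝ} (h0 : 0 ≤ p) (h1 : p ≤ 1) (z K : ℝ) (hz : 0 ≤ z) (hK : 0 ≤ K)
    (A B : Finset (Sym2 (Fin n))) (hA : A ⊆ EE n) (hB : B ⊆ EE n)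
    (hAB : Disjoint A B) (P : SimpleGraph (Fin n) → Prop)
    (hP : ∀ G, P G → A ⊆ ES G ∧ 1 ≤ K * z ^ ((ES G ∩ B).card)) :
    gnpProb n p P ≤ K * (p ^ A.card * (1 - p + p * z) ^ B.card) := by
  rw [← master p z A B hA hB hAB, gnp_eq, mul_sum]
  apply sum_le_sum
  intro G _
  have hw := wt_nonneg h0 h1 G
  split_ifs with h h' h'
  · have := (hP G h).2
    nlinarith
  · exact absurd (hP G h).1 h'
  · positivity
  · simp

lemma gnp_union {n : ℕ} {p : ℝ} (h0 : 0 ≤ p) (h1 : p ≤ 1) {ι : Type*} (s : Finset ι)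
    (P : SimpleGraph (Fin n) → Prop) (Q : ι → SimpleGraph (Fin n) → Prop)
    (h : ∀ G, P G → ∃ i ∈ s, Q i G) :
    gnpProb n p P ≤ ∑ i ∈ s, gnpProb n p (Q i) := by
  simp only [gnp_eq]
  rw [sum_comm]
  apply sum_le_sum
  intro G _
  have hw := wt_nonneg h0 h1 G
  have hnn : ∀ i ∈ s, 0 ≤ (if Q i G then wt n p G else 0) := by
    intro i _; split_ifs <;> simp [hw]
  split_ifs with hP
  · obtain ⟨i, hi, hq⟩ := h G hP
    calc wt n p G = (if Q i G then wt n p G else 0) := by rw [if_pos hq]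
      _ ≤ _ := single_le_sum (f := fun i => if Q i G then wt n p G else 0) hnn hi
  · exact sum_nonneg hnn

lemma gnp_nonneg {n : ℕ} {p : ℝ} (h0 : 0 ≤ p) (h1 : p ≤ 1) (P : SimpleGraph (Fin n) → Prop) :
    0 ≤ gnpProb n p P := by
  rw [gnp_eq]; apply sum_nonneg; intro G _
  have hw := wt_nonneg h0 h1 G
  split_ifs <;> simp [hw]

lemma gnp_total {n : ℕ} (p : ℝ) : ∑ G : SimpleGraph (Fin n), wt n p G = 1 := by
  have := master (n := n) p 1 ∅ ∅ (by simp) (by simp) (by simp)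
  simpa using this

lemma gnp_compl {n : ℕ} {p : ℝ} (P : SimpleGraph (Fin n) → Prop) :
    gnpProb n p P = 1 - gnpProb n p (fun G => ¬ P G) := by
  rw [← gnp_total (n := n) p, gnp_eq, gnp_eq, ← sum_sub_distrib]
  apply sum_congr rfl
  intro G _
  by_cases h : P G <;> simp [h]

end Prob
end HP



namespace HP
section Posa
open scoped Classical
open Finset

lemma pair_append {V : Type*} {l1 l2 : List V} {s t : V} (h : [s,t] <:+: l1 ++ l2) :
    [s,t] <:+: l1 ∨ [s,t] <:+: l2 ∨ (l1.getLast? = some s ∧ l2.head? = some t) := by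
  obtain ⟨a, b, h⟩ := h
  rw [List.append_assoc, List.append_eq_append_iff] at h
  rcases h with ⟨c, rfl, h⟩ | ⟨c, h1, h2⟩
  · cases c with
    | nil => right; left; simp at h; exact ⟨[], b, by simp [h]⟩
    | cons c1 c =>
      simp at h
      obtain ⟨rfl, h⟩ := h
      cases c with
      | nil => right; right; simp at h; simp [← h]
      | cons c2 c => simp at h; obtain ⟨rfl, rfl⟩ := h; left; exact ⟨a, c, by simp⟩
  · subst h2; right; left; exact ⟨c, b, by simp⟩

/-- consecutive elements of a list -/
def AdjIn {V : Type*} (l : List V) (u v : V) : Prop := [u,v] <:+: l ∨ [v,u] <:+: l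

/-- lists reachable by rotations -/
inductive Reach {V : Type*} (Γ : SimpleGraph V) (l0 : List V) : List V → Prop
  | base : Reach Γ l0 l0
  | step (a : List V) (x : V) (b : List V) (y : V) : Reach Γ l0 (a ++ x :: b) →
      b.getLast? = some y → Γ.Adj x y → Reach Γ l0 (a ++ x :: b.reverse)

variable {V : Type*} {Γ : SimpleGraph V} {l0 : List V}

lemma Reach.perm {l : List V} (h : Reach Γ l0 l) : l.Perm l0 := by
  induction h with
  | base => exact List.Perm.refl _
  | step a x b y _ _ _ ih =>
    refine List.Perm.trans ?_ ih
    exact List.Perm.append_left a (List.Perm.cons x b.reverse_perm)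

lemma Reach.chain {l : List V} (h : Reach Γ l0 l) (h0 : l0.IsChain Γ.Adj) : l.IsChain Γ.Adj := by
  induction h with
  | base => exact h0
  | step a x b y _ hy hxy ih =>
    rw [List.isChain_split] at ih ⊢
    refine ⟨ih.1, ?_⟩
    rw [List.isChain_cons] at ih ⊢
    refine ⟨?_, ?_⟩
    · intro z hz
      rw [List.head?_reverse, hy] at hz
      simp at hz; subst hz; exact hxy
    · rw [List.isChain_reverse]
      exact ih.2.2.imp (fun a b h => h.symm)

lemma Reach.head {l : List V} (h : Reach Γ l0 l) : l.head? = l0.head? := by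
  induction h with
  | base => rfl
  | step a x b y _ hy hxy ih => rw [← ih]; cases a <;> simp

/-- external neighbourhood -/
noncomputable def nb [Fintype V] (Γ : SimpleGraph V) (S : Finset V) : Finset V :=
  univ.filter (fun u => u ∉ S ∧ ∃ s ∈ S, Γ.Adj s u)

/-- endpoints reachable by rotation -/
noncomputable def ends [Fintype V] (Γ : SimpleGraph V) (l0 : List V) : Finset V :=
  univ.filter (fun y => ∃ l, Reach Γ l0 l ∧ l.getLast? = some y)

lemma mem_ends [Fintype V] {y : V} : y ∈ ends Γ l0 ↔ ∃ l, Reach Γ l0 l ∧ l.getLast? = some y := by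
  simp [ends]

lemma AdjIn.symm {l : List V} {u v : V} (h : AdjIn l u v) : AdjIn l v u := Or.symm h

lemma reach_adjIn [Fintype V] {u : V} (hu : u ∉ ends Γ l0) (hn : ∀ s ∈ ends Γ l0, ¬ AdjIn l0 u s)
    {l : List V} (h : Reach Γ l0 l) : ∀ v, AdjIn l u v → AdjIn l0 u v := by
  induction h with
  | base => intro v h; exact h
  | step a x b y hr hy hxy ih =>
    intro v hv
    have hyS : y ∈ ends Γ l0 := mem_ends.2 ⟨_, hr, by
      rw [List.getLast?_append, List.getLast?_cons]; simp [hy]⟩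
    have hux : u = x → False := by
      rintro rfl
      cases b with
      | nil => simp at hy
      | cons h b =>
        have hh : h ∈ ends Γ l0 := mem_ends.2 ⟨_, Reach.step a u (h :: b) y hr hy hxy, by simp [List.getLast?_cons]⟩
        exact hn h hh (ih h (Or.inl ⟨a, b, by simp⟩))
    have huy : u ≠ y := by rintro rfl; exact hu hyS
    have key : ∀ s t, (s = u ∨ t = u) → [s, t] <:+: a ++ x :: b.reverse →
        ([s,t] <:+: a ++ x :: b) ∨ ([t,s] <:+: a ++ x :: b) := by
      intro s t hst h
      have h' : [s,t] <:+: (a ++ [x]) ++ b.reverse := by simpa using h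
      rcases pair_append h' with h1 | h1 | ⟨h1, h2⟩
      · left
        have : a ++ x :: b = (a ++ [x]) ++ b := by simp
        rw [this]; exact h1.trans List.infix_append_left
      · right
        have h3 := List.reverse_infix.2 h1
        simp at h3
        have : a ++ x :: b = (a ++ [x]) ++ b := by simp
        rw [this]; exact h3.trans List.infix_append_right
      · exfalso
        simp at h1
        rw [List.head?_reverse, hy] at h2
        simp at h2
        rcases hst with hst | hst
        · exact hux (hst.symm.trans h1.symm)
        · exact huy (hst.symm.trans h2.symm)
    apply ih
    rcases hv with hv | hv
    · exact key u v (Or.inl rfl) hv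
    · exact (key v u (Or.inr rfl) hv).symm

lemma posa [Fintype V] (hne : l0 ≠ []) (hnd : l0.Nodup)
    (hcl : ∀ y ∈ ends Γ l0, ∀ u, Γ.Adj y u → u ∈ l0) :
    (nb Γ (ends Γ l0)).card < 2 * (ends Γ l0).card := by
  set S := ends Γ l0 with hS
  have h1 : ∀ u ∈ nb Γ S, ∃ s ∈ S, AdjIn l0 u s := by
    intro u hu
    simp only [nb, mem_filter, mem_univ, true_and] at hu
    obtain ⟨huS, y, hy, hyu⟩ := hu
    by_contra hcon
    push Not at hcon
    obtain ⟨l, hl, hly⟩ := mem_ends.1 hy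
    have hul : u ∈ l := hl.perm.mem_iff.2 (hcl y hy u hyu)
    obtain ⟨a, b, rfl⟩ := List.append_of_mem hul
    cases b with
    | nil =>
      simp at hly
      subst hly; exact huS hy
    | cons h b =>
      have hh : h ∈ S := mem_ends.2 ⟨_, Reach.step a u (h :: b) y hl (by
        simpa [List.getLast?_append, List.getLast?_cons] using hly) hyu.symm, by simp [List.getLast?_cons]⟩
      exact hcon h hh (reach_adjIn huS hcon hl h (Or.inl ⟨a, b, by simp⟩))
  obtain ⟨e, he⟩ : ∃ e, l0.getLast? = some e := ⟨l0.getLast hne, List.getLast?_eq_getLast_of_ne_nil hne⟩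
  have heS : e ∈ S := mem_ends.2 ⟨l0, Reach.base, he⟩
  have hidx : ∀ s t, [s,t] <:+: l0 → l0.idxOf t = l0.idxOf s + 1 ∧ l0[l0.idxOf s]? = some s
      ∧ l0[l0.idxOf s + 1]? = some t := by
    intro s t ⟨a, b, h⟩
    subst h
    have hsa : s ∉ a := by
      intro h; simp [List.nodup_append] at hnd; grind
    have hta : t ∉ a := by
      intro h; simp [List.nodup_append] at hnd; grind
    have hst : s ≠ t := by
      rintro rfl; simp [List.nodup_append] at hnd
    have e1 : List.idxOf s (a ++ [s, t] ++ b) = a.length := by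
      simp [List.idxOf_append, hsa]
    have e2 : List.idxOf t (a ++ [s, t] ++ b) = a.length + 1 := by
      simp [List.idxOf_append, hta, hst]; omega
    rw [e1, e2]; simp
  have hsub : nb Γ S ⊆ ((S.erase e).image (fun s => l0.getD (l0.idxOf s + 1) e)) ∪
      (S.image (fun s => l0.getD (l0.idxOf s - 1) e)) := by
    intro u hu
    obtain ⟨s, hs, hus⟩ := h1 u hu
    rw [mem_union, mem_image, mem_image]
    rcases hus with h | h
    · right
      obtain ⟨h2, h3, h4⟩ := hidx _ _ h
      refine ⟨s, hs, ?_⟩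
      rw [h2]; simp [h3]
    · left
      obtain ⟨h2, h3, h4⟩ := hidx _ _ h
      refine ⟨s, mem_erase.2 ⟨?_, hs⟩, by simp [h4]⟩
      rintro rfl
      obtain ⟨a, b, rfl⟩ := h
      have : s ∈ u :: b := by
        have : (a ++ [s, u] ++ b).getLast? = (u :: b).getLast? := by
          have : a ++ [s,u] ++ b = (a ++ [s]) ++ (u :: b) := by simp
          rw [this, List.getLast?_append, List.getLast?_cons]; simp
        rw [this] at he
        exact List.mem_of_getLast? he
      have hx : a ++ [s,u] ++ b = a ++ s :: (u :: b) := by simp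
      rw [hx, List.nodup_append] at hnd
      exact (List.nodup_cons.1 hnd.2.1).1 this
  calc (nb Γ S).card ≤ _ := card_le_card hsub
    _ ≤ _ := card_union_le _ _
    _ ≤ (S.erase e).card + S.card := add_le_add card_image_le card_image_le
    _ < 2 * S.card := by
      rw [card_erase_of_mem heS]
      have := card_pos.2 ⟨e, heS⟩
      omega

end Posa
end HP



set_option linter.unusedSectionVars false
set_option linter.unusedSimpArgs false
set_option linter.unusedVariables false
namespace HP
section Boost
open scoped Classical
open Finset

variable {V : Type*} [Fintype V] {Γ : SimpleGraph V}

/-- path as a list, inside the support of the graph -/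
def IsP (Γ : SimpleGraph V) (l : List V) : Prop :=
  l.Nodup ∧ l.IsChain Γ.Adj ∧ ∀ v ∈ l, ∃ u, Γ.Adj v u

/-- longest path -/
def Longest (Γ : SimpleGraph V) (l : List V) : Prop :=
  IsP Γ l ∧ ∀ l', IsP Γ l' → l'.length ≤ l.length

/-- expander on W -/
def Exps (Γ : SimpleGraph V) (W : Finset V) : Prop :=
  ∀ S ⊆ W, 4 * S.card ≤ W.card → 2 * S.card ≤ (nb Γ S).card

/-- all edges inside W -/
def InW (Γ : SimpleGraph V) (W : Finset V) : Prop := ∀ u v, Γ.Adj u v → u ∈ W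

/-- pairs joined by longest path -/
noncomputable def boost (Γ : SimpleGraph V) : Finset (Sym2 V) :=
  univ.filter (fun e => ∃ y t l, e = s(y,t) ∧ Longest Γ l ∧ l.head? = some y ∧
    l.getLast? = some t ∧ y ≠ t)

lemma exists_max {α : Type*} (P : α → Prop) (f : α → ℕ) (N : ℕ) (hN : ∀ x, P x → f x ≤ N)
    (hne : ∃ x, P x) : ∃ x, P x ∧ ∀ y, P y → f y ≤ f x := by
  have hb : BddAbove (f '' {x | P x}) := ⟨N, by rintro _ ⟨x, hx, rfl⟩; exact hN x hx⟩
  have hn : (f '' {x | P x}).Nonempty := by obtain ⟨x, hx⟩ := hne; exact ⟨_, x, hx, rfl⟩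
  obtain ⟨x, hx, hfx⟩ := Nat.sSup_mem hn hb
  exact ⟨x, hx, fun y hy => by rw [hfx]; exact le_csSup hb ⟨y, hy, rfl⟩⟩

lemma IsP.snoc {l : List V} (h : IsP Γ l) {y u : V} (hy : l.getLast? = some y) (hyu : Γ.Adj y u)
    (hu : u ∉ l) : IsP Γ (l ++ [u]) := by
  refine ⟨?_, ?_, ?_⟩
  · rw [List.nodup_append]
    refine ⟨h.1, by simp, ?_⟩
    intro a ha b hb
    simp at hb; subst hb; rintro rfl; exact hu ha
  · rw [List.isChain_append]
    refine ⟨h.2.1, by simp, ?_⟩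
    intro x hx z hz
    simp [hy] at hx hz
    subst hx; subst hz; exact hyu
  · intro v hv
    rw [List.mem_append] at hv
    rcases hv with hv | hv
    · exact h.2.2 v hv
    · simp at hv; subst hv; exact ⟨y, hyu.symm⟩

lemma IsP.reach {l l' : List V} (h : IsP Γ l) (hr : Reach Γ l l') : IsP Γ l' :=
  ⟨hr.perm.nodup_iff.2 h.1, hr.chain h.2.1, fun v hv => h.2.2 v (hr.perm.mem_iff.1 hv)⟩

lemma Longest.reach {l l' : List V} (h : Longest Γ l) (hr : Reach Γ l l') : Longest Γ l' :=
  ⟨h.1.reach hr, fun m hm => by rw [hr.perm.length_eq]; exact h.2 m hm⟩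

lemma Longest.cl {l : List V} (h : Longest Γ l) : ∀ y ∈ ends Γ l, ∀ u, Γ.Adj y u → u ∈ l := by
  intro y hy u hyu
  obtain ⟨l', hr, hl'⟩ := mem_ends.1 hy
  by_contra hu
  have h' := h.reach hr
  have hu' : u ∉ l' := fun hc => hu (hr.perm.mem_iff.1 hc)
  have := h'.2 _ (h'.1.snoc hl' hyu hu')
  simp at this

lemma IsP.rev {l : List V} (h : IsP Γ l) : IsP Γ l.reverse :=
  ⟨by simpa using h.1, by
    rw [List.isChain_reverse]; exact h.2.1.imp (fun a b h => h.symm),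
   fun v hv => h.2.2 v (by simpa using hv)⟩

lemma Longest.rev {l : List V} (h : Longest Γ l) : Longest Γ l.reverse :=
  ⟨h.1.rev, by simpa using h.2⟩

lemma IsP.len {l : List V} (h : IsP Γ l) : l.length ≤ Fintype.card V := h.1.length_le_card

lemma exists_longest (Γ : SimpleGraph V) : ∃ l, Longest Γ l :=
  exists_max (IsP Γ) List.length (Fintype.card V) (fun _ h => h.len) ⟨[], by simp [IsP]⟩

lemma ends_big {W : Finset V} (hE : Exps Γ W) {l : List V} (hW : ∀ v ∈ l, v ∈ W)
    (hnd : l.Nodup) (hne : l ≠ [])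
    (hcl : ∀ y ∈ ends Γ l, ∀ u, Γ.Adj y u → u ∈ l) : W.card < 4 * (ends Γ l).card := by
  have h1 := posa hne hnd hcl
  by_contra hcon
  have := hE (ends Γ l) (by
    intro y hy
    obtain ⟨l', hr, hl'⟩ := mem_ends.1 hy
    exact hW y (hr.perm.mem_iff.1 (List.mem_of_getLast? hl'))) (by omega)
  omega

lemma exps_nbr {W : Finset V} (hE : Exps Γ W) (hW : 4 ≤ W.card) :
    ∃ w u, Γ.Adj w u := by
  obtain ⟨w, hw⟩ := card_pos.1 (by omega : 0 < W.card)
  have := hE {w} (by simpa using hw) (by simpa using hW)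
  obtain ⟨u, hu⟩ := card_pos.1 (by simp at this; omega : 0 < (nb Γ {w}).card)
  simp [nb] at hu
  exact ⟨w, u, hu.2⟩

lemma Longest.two {W : Finset V} (hE : Exps Γ W) (hW : 4 ≤ W.card) {l : List V}
    (h : Longest Γ l) : 2 ≤ l.length := by
  obtain ⟨w, u, hwu⟩ := exps_nbr hE hW
  refine h.2 [w, u] ⟨?_, ?_, ?_⟩
  · simp [hwu.ne]
  · simp [hwu]
  · intro v hv; simp at hv; rcases hv with rfl | rfl
    · exact ⟨_, hwu⟩
    · exact ⟨_, hwu.symm⟩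

lemma IsP.inW {W : Finset V} (hI : InW Γ W) {l : List V} (h : IsP Γ l) : ∀ v ∈ l, v ∈ W := by
  intro v hv
  obtain ⟨u, hu⟩ := h.2.2 v hv
  exact hI v u hu

lemma head_ne_last {l : List V} (h : l.Nodup) (h2 : 2 ≤ l.length) {y t : V}
    (hy : l.head? = some y) (ht : l.getLast? = some t) : y ≠ t := by
  match l, h, h2 with
  | a :: b :: l, h, _ =>
    simp at hy; subst hy
    rw [List.getLast?_cons_cons] at ht
    have := List.mem_of_getLast? ht
    rintro rfl
    exact (List.nodup_cons.1 h).1 this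

lemma boost_card {W : Finset V} (hE : Exps Γ W) (hI : InW Γ W) (hW : 4 ≤ W.card) :
    W.card ^ 2 ≤ 32 * (boost Γ).card := by
  obtain ⟨l, hl⟩ := exists_longest Γ
  have big : ∀ l, Longest Γ l → W.card < 4 * (ends Γ l).card := by
    intro l hl
    refine ends_big hE (hl.1.inW hI) hl.1.1 ?_ hl.cl
    rintro rfl; have := hl.two hE hW; simp at this
  set D : Finset (V × V) := univ.filter (fun q => s(q.1, q.2) ∈ boost Γ) with hD
  have h1 : ∀ y ∈ ends Γ l, ∃ T : Finset V, W.card < 4 * T.card ∧ ∀ t ∈ T, (y, t) ∈ D := by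
    intro y hy
    obtain ⟨l', hr, hl'⟩ := mem_ends.1 hy
    have h' := (hl.reach hr).rev
    refine ⟨ends Γ l'.reverse, big _ h', ?_⟩
    intro t ht
    obtain ⟨m, hm, hmt⟩ := mem_ends.1 ht
    have hmL := h'.reach hm
    have hmy : m.head? = some y := by rw [hm.head, List.head?_reverse, hl']
    simp only [hD, mem_filter, mem_univ, true_and, boost]
    exact ⟨y, t, m, rfl, hmL, hmy, hmt, head_ne_last hmL.1.1 (hmL.two hE hW) hmy hmt⟩
  choose! T hT1 hT2 using h1
  have h2 : ((ends Γ l).sigma T).card ≤ D.card := by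
    refine card_le_card_of_injOn (fun q => (q.1, q.2)) ?_ ?_
    · intro q hq
      have hq := mem_sigma.1 (mem_coe.1 hq)
      exact hT2 q.1 hq.1 q.2 hq.2
    · rintro ⟨a, b⟩ _ ⟨c, d⟩ _ h
      simp at h; obtain ⟨rfl, rfl⟩ := h; rfl
  have h3 : (ends Γ l).card * W.card ≤ 4 * D.card := by
    rw [card_sigma] at h2
    calc (ends Γ l).card * W.card = ∑ y ∈ ends Γ l, W.card := by simp
      _ ≤ ∑ y ∈ ends Γ l, 4 * (T y).card := sum_le_sum (fun y hy => (hT1 y hy).le)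
      _ = 4 * ∑ y ∈ ends Γ l, (T y).card := by rw [mul_sum]
      _ ≤ _ := by omega
  have h4 : D.card ≤ 2 * (boost Γ).card := by
    refine card_le_mul_card_image_of_maps_to (f := fun q : V × V => s(q.1, q.2)) ?_ 2 ?_
    · intro q hq; simpa [hD] using hq
    · intro e _
      induction e using Sym2.ind with
      | _ x y =>
        calc _ ≤ ({(x,y), (y,x)} : Finset (V × V)).card := by
              apply card_le_card
              rintro ⟨a, b⟩ hq
              simp at hq ⊢
              tauto
          _ ≤ 2 := card_le_two
  have h5 := big l hl
  nlinarith

lemma exps_conn {W X : Finset V} (hE : Exps Γ W) (hI : InW Γ W) (hW : 12 ≤ W.card) (hX : X ⊆ W)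
    (h0 : X.Nonempty) (h1 : X ≠ W) : ∃ x ∈ X, ∃ z ∈ W \ X, Γ.Adj x z := by
  by_contra hcon
  push Not at hcon
  have key : ∀ C ⊆ W, C.Nonempty → 2 * C.card ≤ W.card →
      (∀ x ∈ C, ∀ z ∈ W \ C, ¬ Γ.Adj x z) → False := by
    intro C hC hne hcard hno
    obtain ⟨S, hSC, hS⟩ := exists_subset_card_eq (min_le_left C.card (W.card / 4))
    have h2 := hE S (hSC.trans hC) (by omega)
    have h3 : nb Γ S ⊆ C \ S := by
      intro u hu
      simp only [nb, mem_filter, mem_univ, true_and] at hu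
      obtain ⟨hu, s, hs, hsu⟩ := hu
      refine mem_sdiff.2 ⟨?_, hu⟩
      by_contra huC
      exact hno s (hSC hs) u (mem_sdiff.2 ⟨hI u s hsu.symm, huC⟩) hsu
    have h4 := card_le_card h3
    rw [card_sdiff_of_subset hSC] at h4
    have := card_pos.2 hne
    omega
  have hc : (W \ X).card = W.card - X.card := card_sdiff_of_subset hX
  have hle := card_le_card hX
  by_cases h : 2 * X.card ≤ W.card
  · exact key X hX h0 h hcon
  · refine key (W \ X) sdiff_subset ?_ (by omega) ?_
    · rw [sdiff_nonempty]; intro h; exact h1 (subset_antisymm hX h)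
    · intro x hx z hz hxz
      rw [sdiff_sdiff_right_self] at hz
      exact hcon z (by simpa using (mem_inter.1 hz).2) x hx hxz.symm

/-- opening up a cycle at a vertex -/
lemma cycle_open {l : List V} (hnd : l.Nodup) (hc : l.IsChain Γ.Adj) {y t : V}
    (hy : l.head? = some y) (ht : l.getLast? = some t) (hty : Γ.Adj t y) {x : V} (hx : x ∈ l) :
    ∃ m : List V, m.Nodup ∧ m.IsChain Γ.Adj ∧ m.Perm l ∧ m.head? = some x := by
  obtain ⟨a, b, rfl⟩ := List.append_of_mem hx
  refine ⟨(x :: b) ++ a, ?_, ?_, List.perm_append_comm, by simp⟩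
  · exact (List.perm_append_comm.nodup_iff).1 hnd
  · rw [List.isChain_append] at hc ⊢
    refine ⟨hc.2.1, hc.1, ?_⟩
    intro u hu v hv
    have h1 : v = y := by
      cases a with
      | nil => simp at hv
      | cons a0 a => simp at hy hv; rw [← hv, hy]
    have h2 : u = t := by
      rw [List.getLast?_append] at ht
      rw [Option.mem_def] at hu
      rw [hu] at ht; simpa using ht
    rw [h1, h2]; exact hty

lemma nb_mono {Γ' : SimpleGraph V} (h : Γ ≤ Γ') (S : Finset V) : nb Γ S ⊆ nb Γ' S := by
  intro u hu
  simp only [nb, mem_filter, mem_univ, true_and] at hu ⊢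
  obtain ⟨h1, s, hs, h2⟩ := hu
  exact ⟨h1, s, hs, h h2⟩

lemma Exps.mono {Γ' : SimpleGraph V} {W : Finset V} (h : Γ ≤ Γ') (hE : Exps Γ W) : Exps Γ' W :=
  fun S hS hc => (hE S hS hc).trans (card_le_card (nb_mono h S))

theorem ham {G Γ0 : SimpleGraph V} {W : Finset V} (h0G : Γ0 ≤ G) (hI : InW Γ0 W) (hE : Exps Γ0 W)
    (hW : 12 ≤ W.card) (k0 : ℕ) (hk : (ES Γ0).card ≤ k0)
    (hB : ∀ Γ ≤ G, (ES Γ).card ≤ k0 + Fintype.card V → W.card ^ 2 ≤ 32 * (boost Γ).card →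
      ∃ e ∈ boost Γ, e ∈ G.edgeSet) :
    ∃ Γ ≤ G, InW Γ W ∧ Exps Γ W ∧ ∃ l y t, IsP Γ l ∧ (∀ v, v ∈ l ↔ v ∈ W) ∧
      l.head? = some y ∧ l.getLast? = some t ∧ Γ.Adj t y := by
  obtain ⟨⟨Γ, l⟩, ⟨hΓ0, hΓG, hΓI, hlP, hcard⟩, hmax⟩ := exists_max
    (fun q : SimpleGraph V × List V => Γ0 ≤ q.1 ∧ q.1 ≤ G ∧ InW q.1 W ∧ IsP q.1 q.2 ∧
      (ES q.1).card ≤ k0 + q.2.length) (fun q => q.2.length) (Fintype.card V)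
    (fun q hq => hq.2.2.2.1.len) ⟨(Γ0, []), le_refl _, h0G, hI, by simp [IsP], by simpa using hk⟩
  simp only at hΓ0 hΓG hΓI hlP hcard hmax
  have hΓE := hE.mono hΓ0
  have hlen := hlP.len
  obtain ⟨e, heB, heG⟩ := hB Γ hΓG (by omega) (boost_card hΓE hΓI (by omega))
  simp only [boost, mem_filter, mem_univ, true_and] at heB
  obtain ⟨y, t, m, rfl, hm, hmy, hmt, hyt⟩ := heB
  have hml : l.length ≤ m.length := hm.2 l hlP
  have hmW := hm.1.inW hΓI
  have hyW : y ∈ W := hmW y (List.mem_of_head? hmy)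
  have htW : t ∈ W := hmW t (List.mem_of_getLast? hmt)
  set Γ' := Γ ⊔ SimpleGraph.edge y t with hΓ'
  have hle : Γ ≤ Γ' := le_sup_left
  have hadj : ∀ u v, Γ'.Adj u v → Γ.Adj u v ∨ s(u,v) = s(y,t) := by
    intro u v huv
    rw [hΓ', SimpleGraph.sup_adj, SimpleGraph.edge_adj] at huv
    rcases huv with h | h
    · exact Or.inl h
    · right; simp; tauto
  have hty : Γ'.Adj t y := by
    rw [hΓ', SimpleGraph.sup_adj, SimpleGraph.edge_adj]
    right; exact ⟨Or.inr ⟨rfl, rfl⟩, hyt.symm⟩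
  have hI' : InW Γ' W := by
    intro u v huv
    rcases hadj u v huv with h | h
    · exact hΓI u v h
    · simp at h; rcases h with ⟨rfl, rfl⟩ | ⟨rfl, rfl⟩ <;> assumption
  have hG' : Γ' ≤ G := by
    intro u v huv
    rcases hadj u v huv with h | h
    · exact hΓG h
    · rw [← SimpleGraph.mem_edgeSet, h]; exact heG
  have hc' : (ES Γ').card ≤ (ES Γ).card + 1 := by
    refine (card_le_card ?_).trans (card_insert_le s(y,t) (ES Γ))
    intro e he
    rw [mem_ES] at he
    induction e using Sym2.ind with
    | _ u v =>
      rw [mem_insert, mem_ES]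
      rcases hadj u v he with h | h
      · exact Or.inr h
      · exact Or.inl h
  have hmP' : IsP Γ' m := ⟨hm.1.1, hm.1.2.1.imp (fun _ _ h => hle h), fun v hv => by
    obtain ⟨u, hu⟩ := hm.1.2.2 v hv; exact ⟨u, hle hu⟩⟩
  have hE' := hΓE.mono hle
  by_cases hfull : m.toFinset = W
  · refine ⟨Γ', hG', hI', hE', m, y, t, hmP', ?_, hmy, hmt, hty⟩
    intro v; rw [← hfull]; simp
  · exfalso
    obtain ⟨x, hx, z, hz, hxz⟩ := exps_conn hE' hI' hW (X := m.toFinset)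
      (fun v hv => hmW v (by simpa using hv))
      ⟨y, by simpa using List.mem_of_head? hmy⟩ hfull
    rw [List.mem_toFinset] at hx
    rw [mem_sdiff, List.mem_toFinset] at hz
    obtain ⟨m', h1, h2, h3, h4⟩ := cycle_open hmP'.1 hmP'.2.1 hmy hmt hty hx
    have hm'P : IsP Γ' m' := ⟨h1, h2, fun v hv => hmP'.2.2 v (h3.mem_iff.1 hv)⟩
    have h5 := hm'P.rev.snoc (by rw [List.getLast?_reverse, h4]) hxz
      (by simpa using fun h => hz.2 (h3.mem_iff.1 h))
    have h6 : (m'.reverse ++ [z]).length = m.length + 1 := by simp [h3.length_eq]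
    have := hmax (Γ', m'.reverse ++ [z]) ⟨hΓ0.trans hle, hG', hI', h5, by simp only [h6]; omega⟩
    simp only [h6] at this
    omega

theorem ham_ends {G Γ : SimpleGraph V} {W : Finset V} (hG : Γ ≤ G) (hE : Exps Γ W)
    {l : List V} {y t : V} (hP : IsP Γ l) (hl : ∀ v, v ∈ l ↔ v ∈ W) (hy : l.head? = some y)
    (ht : l.getLast? = some t) (hty : Γ.Adj t y) (hI : InW Γ W) {w : V} (hw : w ∈ W) :
    ∃ Y ⊆ W, W.card < 4 * Y.card ∧ ∀ y ∈ Y, ∃ m : List V, m.Nodup ∧ m.IsChain G.Adj ∧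
      (∀ v, v ∈ m ↔ v ∈ W) ∧ m.head? = some w ∧ m.getLast? = some y := by
  obtain ⟨m, h1, h2, h3, h4⟩ := cycle_open hP.1 hP.2.1 hy ht hty ((hl w).2 hw)
  have hmW : ∀ v, v ∈ m ↔ v ∈ W := fun v => (h3.mem_iff).trans (hl v)
  refine ⟨ends Γ m, ?_, ends_big hE (fun v hv => (hmW v).1 hv) h1 ?_ ?_, ?_⟩
  · intro y hy
    obtain ⟨l', hr, hl'⟩ := mem_ends.1 hy
    exact (hmW y).1 (hr.perm.mem_iff.1 (List.mem_of_getLast? hl'))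
  · rintro rfl; simp at h4
  · intro y _ u hyu; exact (hmW u).2 (hI u y hyu.symm)
  · intro y hy
    obtain ⟨l', hr, hl'⟩ := mem_ends.1 hy
    exact ⟨l', hr.perm.nodup_iff.2 h1, (hr.chain h2).imp (fun _ _ h => hG h),
      fun v => hr.perm.mem_iff.trans (hmW v), hr.head.trans h4, hl'⟩

end Boost
end HP


namespace HP
section WalkConv

lemma list_walk {V : Type*} (G : SimpleGraph V) (s : Set V) :
    ∀ (m : List V) (w y : V) (hw : w ∈ s) (hy : y ∈ s), m.IsChain G.Adj → (∀ v ∈ m, v ∈ s) →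
      m.head? = some w → m.getLast? = some y →
      ∃ P : (G.induce s).Walk ⟨w, hw⟩ ⟨y, hy⟩, P.support.map Subtype.val = m := by
  intro m
  induction m with
  | nil => intro w y hw hy _ _ h; simp at h
  | cons a m ih =>
    intro w y hw hy hc hs hh hl
    simp at hh; subst hh
    cases m with
    | nil => simp at hl; subst hl; exact ⟨SimpleGraph.Walk.nil, by simp⟩
    | cons b m =>
      have hb : b ∈ s := hs b (by simp)
      rw [List.isChain_cons_cons] at hc
      obtain ⟨P, hP⟩ := ih b y hb hy hc.2 (fun v hv => hs v (List.mem_cons_of_mem _ hv)) (by simp)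
        (by rw [← hl, List.getLast?_cons_cons])
      refine ⟨SimpleGraph.Walk.cons (v := ⟨b, hb⟩) (by simpa using hc.1) P, ?_⟩
      simp [hP]

lemma list_ham {V : Type*} [DecidableEq V] (G : SimpleGraph V) (W : Finset V) (m : List V)
    (w y : V) (hw : w ∈ (↑W : Set V)) (hy : y ∈ (↑W : Set V)) (hnd : m.Nodup) (hc : m.IsChain G.Adj)
    (hm : ∀ v, v ∈ m ↔ v ∈ W) (hh : m.head? = some w) (hl : m.getLast? = some y) :
    ∃ P : (G.induce (↑W : Set V)).Walk ⟨w, hw⟩ ⟨y, hy⟩, P.IsPath ∧ P.IsHamiltonian := by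
  obtain ⟨P, hP⟩ := list_walk G (↑W : Set V) m w y hw hy hc (fun v hv => by simpa using (hm v).1 hv)
    hh hl
  have h1 : P.IsPath := by
    rw [SimpleGraph.Walk.isPath_def]
    exact List.Nodup.of_map Subtype.val (by rw [hP]; exact hnd)
  refine ⟨P, h1, ?_⟩
  rw [h1.isHamiltonian_iff]
  rintro ⟨v, hv⟩
  have h2 : v ∈ P.support.map Subtype.val := by rw [hP]; exact (hm v).2 (by simpa using hv)
  rw [List.mem_map] at h2
  obtain ⟨a, ha, rfl⟩ := h2
  exact ha
end WalkConv
end HP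



set_option linter.unusedSectionVars false
set_option linter.unusedSimpArgs false
set_option linter.unusedVariables false
namespace HP
section Expand
open scoped Classical
open Finset

variable {V : Type*} [Fintype V]

/-- neighbourhood -/
noncomputable def N (G : SimpleGraph V) (v : V) : Finset V := univ.filter (fun u => G.Adj v u)

lemma mem_N {G : SimpleGraph V} {u v : V} : u ∈ N G v ↔ G.Adj v u := by simp [N]

/-- edges inside U -/
noncomputable def eIn (U : Finset V) : Finset (Sym2 V) :=
  univ.filter (fun e => ¬ e.IsDiag ∧ ∀ v ∈ e, v ∈ U)

/-- pseudorandomness package -/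
structure Props (G H : SimpleGraph V) (D : ℝ) (M : ℕ) : Prop where
  p1 : ∀ v, 2 ≤ (N G v).card
  p2a : ∀ x y, ((N G x).card : ℝ) < D → ((N G y).card : ℝ) < D → x ≠ y →
    ∀ w : G.Walk x y, 5 ≤ w.length
  p2b : ∀ x u, ((N G x).card : ℝ) < D → x ≠ u → (N G x ∩ N G u).card ≤ 1
  p2c : ∀ x u, ((N G x).card : ℝ) < D → G.Adj x u → N G x ∩ N G u = ∅
  p3 : ∀ U : Finset V, U.Nonempty → U.card ≤ 5 * M →
    10 * ((ES G ∩ eIn U).card : ℝ) < D * U.card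
  p4 : ∀ A B : Finset V, Disjoint A B → M ≤ A.card → M ≤ B.card →
    ∃ a ∈ A, ∃ b ∈ B, G.Adj a b ∧ H.Adj a b

lemma nb_large {G Γ : SimpleGraph V} {D : ℝ} {M : ℕ} {H : SimpleGraph V} (hp : Props G H D M)
    (hΓ : Γ ≤ G) (S : Finset V) (hS : S.card ≤ M) (hd : ∀ v ∈ S, D ≤ ((N Γ v).card : ℝ)) :
    4 * S.card ≤ (nb Γ S).card := by
  by_contra hcon
  push Not at hcon
  have hne : S.Nonempty := by
    rw [nonempty_iff_ne_empty]; rintro rfl; simp at hcon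
  set U := S ∪ nb Γ S with hU
  have hUc : U.card ≤ 5 * S.card := (card_union_le _ _).trans (by omega)
  have h3 := hp.p3 U (hne.mono subset_union_left) (by omega)
  have h4 : (S.sigma (N Γ)).card ≤ 2 * (ES G ∩ eIn U).card := by
    refine card_le_mul_card_image_of_maps_to (f := fun q : (_ : V) × V => s(q.1, q.2)) ?_ 2 ?_
    · rintro ⟨a, b⟩ hq
      rw [mem_sigma, mem_N] at hq
      obtain ⟨ha, hab⟩ := hq
      simp only at ha hab
      rw [mem_inter, mem_ES]
      refine ⟨hΓ hab, ?_⟩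
      simp only [eIn, mem_filter, mem_univ, true_and, Sym2.mk_isDiag_iff, Sym2.mem_iff]
      refine ⟨hab.ne, ?_⟩
      have haU : a ∈ U := mem_union_left _ ha
      have hbU : b ∈ U := by
        by_cases hb : b ∈ S
        · exact mem_union_left _ hb
        · apply mem_union_right
          simp only [nb, mem_filter, mem_univ, true_and]
          exact ⟨hb, a, ha, hab⟩
      rintro v (rfl | rfl) <;> assumption
    · intro e _
      induction e using Sym2.ind with
      | _ x y =>
        calc _ ≤ ({⟨x,y⟩, ⟨y,x⟩} : Finset ((_ : V) × V)).card := by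
              apply card_le_card
              rintro ⟨a, b⟩ hq
              rw [mem_filter] at hq
              have := hq.2
              rw [Sym2.eq_iff] at this
              simp only [mem_insert, mem_singleton]
              rcases this with ⟨h1, h2⟩ | ⟨h1, h2⟩ <;> simp only at h1 h2 <;> subst h1 <;> subst h2
              · exact Or.inl rfl
              · exact Or.inr rfl
          _ ≤ 2 := card_le_two
  rw [card_sigma] at h4
  have h5 : D * S.card ≤ ((∑ v ∈ S, (N Γ v).card : ℕ) : ℝ) := by
    push_cast
    calc D * S.card = ∑ v ∈ S, D := by simp [mul_comm]
      _ ≤ _ := sum_le_sum hd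
  have h6 : ((∑ v ∈ S, (N Γ v).card : ℕ) : ℝ) ≤ 2 * ((ES G ∩ eIn U).card : ℝ) := by exact_mod_cast h4
  have h7 : (U.card : ℝ) ≤ 5 * S.card := by exact_mod_cast hUc
  have hU0 : (0:ℝ) < U.card := by
    exact_mod_cast card_pos.2 (hne.mono subset_union_left)
  have hD : 0 < D := by
    by_contra hD
    push Not at hD
    have : D * U.card ≤ 0 := mul_nonpos_of_nonpos_of_nonneg hD hU0.le
    have : (0:ℝ) ≤ ((ES G ∩ eIn U).card : ℝ) := by positivity
    linarith
  nlinarith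

lemma expand {G Γ : SimpleGraph V} {D : ℝ} {M : ℕ} {H : SimpleGraph V} {W : Finset V}
    (hp : Props G H D M) (hΓ : Γ ≤ G) (hI : InW Γ W)
    (ha : ∀ v ∈ W, ((N G v).card : ℝ) < D → ∀ u, G.Adj v u → Γ.Adj v u)
    (hb : ∀ v ∈ W, D ≤ ((N G v).card : ℝ) → D ≤ ((N Γ v).card : ℝ))
    (hc : ∀ a ∈ W, ∀ b ∈ W, G.Adj a b → H.Adj a b → Γ.Adj a b) : Exps Γ W := by
  intro S hSW hS4
  by_cases hSM : S.card ≤ M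
  swap
  · push Not at hSM
    by_contra hcon
    push Not at hcon
    set T := W \ (S ∪ nb Γ S) with hT
    have h1 : W.card ≤ T.card + (S ∪ nb Γ S).card := by
      have := card_le_card (show W ⊆ T ∪ (S ∪ nb Γ S) by
        intro x hx; rw [hT, sdiff_union_self_eq_union]; exact mem_union_left _ hx)
      exact this.trans (card_union_le _ _)
    have h2 := card_union_le S (nb Γ S)
    obtain ⟨a, haS, b, hbT, hab, habH⟩ := hp.p4 S T (by
      rw [disjoint_left]; intro x hx hxT; rw [hT, mem_sdiff] at hxT
      exact hxT.2 (mem_union_left _ hx)) hSM.le (by omega)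
    rw [hT, mem_sdiff, mem_union, not_or] at hbT
    apply hbT.2.2
    simp only [nb, mem_filter, mem_univ, true_and]
    exact ⟨hbT.2.1, a, haS, hc a (hSW haS) b hbT.1 hab habH⟩
  set S1 := S.filter (fun v => ((N G v).card : ℝ) < D) with hS1
  set S2 := S.filter (fun v => ¬ ((N G v).card : ℝ) < D) with hS2
  have hcard : S1.card + S2.card = S.card := card_filter_add_card_filter_not _
  have hS1s : ∀ x ∈ S1, x ∈ S ∧ ((N G x).card : ℝ) < D := fun x hx => mem_filter.1 hx
  have hS2s : ∀ x ∈ S2, x ∈ S ∧ ¬ ((N G x).card : ℝ) < D := fun x hx => mem_filter.1 hx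
  have claim1 : 4 * S2.card ≤ (nb Γ S2).card := by
    apply nb_large hp hΓ S2 ((card_le_card (filter_subset _ _)).trans hSM)
    intro v hv
    exact hb v (hSW (hS2s v hv).1) (not_lt.1 (hS2s v hv).2)
  set N1 := S1.biUnion (N G) with hN1
  have far : ∀ x ∈ S1, ∀ y ∈ S1, (∃ w : G.Walk x y, w.length ≤ 4) → x = y := by
    intro x hx y hy ⟨w, hw⟩
    by_contra hxy
    have := hp.p2a x y (hS1s x hx).2 (hS1s y hy).2 hxy w
    omega
  have claim2 : 2 * S1.card ≤ N1.card := by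
    rw [hN1, card_biUnion]
    · calc 2 * S1.card = ∑ x ∈ S1, 2 := by simp [mul_comm]
        _ ≤ _ := sum_le_sum (fun x _ => hp.p1 x)
    · intro x hx y hy hxy
      refine disjoint_left.2 ?_
      intro a hax hay
      rw [mem_N] at hax hay
      exact hxy (far x hx y hy ⟨.cons hax (.cons hay.symm .nil), by simp⟩)
  have hN1S1 : ∀ u ∈ N1, u ∉ S1 := by
    intro u hu hu1
    rw [hN1, mem_biUnion] at hu
    obtain ⟨x, hx, hxu⟩ := hu
    rw [mem_N] at hxu
    exact hxu.ne (far x hx u hu1 ⟨.cons hxu .nil, by simp⟩)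
  have claim3 : (N1 ∩ (S2 ∪ nb Γ S2)).card ≤ S2.card := by
    have hsub : N1 ∩ (S2 ∪ nb Γ S2) ⊆ S2.biUnion (fun u => N1 ∩ insert u (N G u)) := by
      intro v hv
      rw [mem_inter, mem_union] at hv
      rw [mem_biUnion]
      rcases hv.2 with h | h
      · exact ⟨v, h, mem_inter.2 ⟨hv.1, mem_insert_self _ _⟩⟩
      · simp only [nb, mem_filter, mem_univ, true_and] at h
        obtain ⟨_, s, hs, hsv⟩ := h
        exact ⟨s, hs, mem_inter.2 ⟨hv.1, mem_insert_of_mem (mem_N.2 (hΓ hsv))⟩⟩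
    refine (card_le_card hsub).trans ((card_biUnion_le_card_mul _ _ 1 ?_).trans (by simp))
    intro u hu
    rw [card_le_one]
    intro a ha' b hb'
    by_contra hab
    rw [mem_inter, mem_insert, hN1, mem_biUnion] at ha' hb'
    obtain ⟨⟨x, hx, hxa⟩, hau⟩ := ha'
    obtain ⟨⟨y, hy, hyb⟩, hbu⟩ := hb'
    rw [mem_N] at hxa hyb
    have e1 : ∃ w : G.Walk a u, w.length ≤ 1 := by
      rcases hau with rfl | h
      · exact ⟨.nil, by simp⟩
      · exact ⟨.cons (mem_N.1 h).symm .nil, by simp⟩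
    have e2 : ∃ w : G.Walk u b, w.length ≤ 1 := by
      rcases hbu with rfl | h
      · exact ⟨.nil, by simp⟩
      · exact ⟨.cons (mem_N.1 h) .nil, by simp⟩
    obtain ⟨w1, hw1⟩ := e1
    obtain ⟨w2, hw2⟩ := e2
    have hxy : x = y := far x hx y hy ⟨.cons hxa ((w1.append w2).append (.cons hyb.symm .nil)), by
      simp [SimpleGraph.Walk.length_append]; omega⟩
    subst hxy
    have hxs := (hS1s x hx).2
    have hxu : x ≠ u := by rintro rfl; exact (hS2s _ hu).2 hxs
    rcases hau with rfl | hau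
    · rcases hbu with rfl | hbu
      · exact hab rfl
      · have := hp.p2c x a hxs hxa
        have hh : b ∈ N G x ∩ N G a := mem_inter.2 ⟨mem_N.2 hyb, hbu⟩
        rw [this] at hh; simp at hh
    · rcases hbu with rfl | hbu
      · have := hp.p2c x b hxs hyb
        have hh : a ∈ N G x ∩ N G b := mem_inter.2 ⟨mem_N.2 hxa, hau⟩
        rw [this] at hh; simp at hh
      · have := card_le_one.1 (hp.p2b x u hxs hxu) a (mem_inter.2 ⟨mem_N.2 hxa, hau⟩) b
          (mem_inter.2 ⟨mem_N.2 hyb, hbu⟩)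
        exact hab this
  have claim4 : (nb Γ S2 ∩ S1).card ≤ S2.card := by
    have hsub : nb Γ S2 ∩ S1 ⊆ S2.biUnion (fun u => S1 ∩ N G u) := by
      intro v hv
      rw [mem_inter] at hv
      obtain ⟨h, h'⟩ := hv
      simp only [nb, mem_filter, mem_univ, true_and] at h
      obtain ⟨_, s, hs, hsv⟩ := h
      exact mem_biUnion.2 ⟨s, hs, mem_inter.2 ⟨h', mem_N.2 (hΓ hsv)⟩⟩
    refine (card_le_card hsub).trans ((card_biUnion_le_card_mul _ _ 1 ?_).trans (by simp))
    intro u hu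
    rw [card_le_one]
    intro a ha' b hb'
    rw [mem_inter, mem_N] at ha' hb'
    exact far a ha'.1 b hb'.1 ⟨.cons ha'.2.symm (.cons hb'.2 .nil), by simp⟩
  have hsub : (N1 \ (S2 ∪ nb Γ S2)) ∪ (nb Γ S2 \ S1) ⊆ nb Γ S := by
    have hS12 : ∀ u, u ∉ S1 → u ∉ S2 → u ∉ S := by
      intro u h1 h2 h
      by_cases hh : ((N G u).card : ℝ) < D
      · exact h1 (mem_filter.2 ⟨h, hh⟩)
      · exact h2 (mem_filter.2 ⟨h, hh⟩)
    intro u hu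
    rw [mem_union, mem_sdiff, mem_sdiff] at hu
    simp only [nb, mem_filter, mem_univ, true_and]
    rcases hu with ⟨h1, h2⟩ | ⟨h1, h2⟩
    · refine ⟨hS12 u (hN1S1 u h1) (fun h => h2 (mem_union_left _ h)), ?_⟩
      rw [hN1, mem_biUnion] at h1
      obtain ⟨x, hx, hxu⟩ := h1
      exact ⟨x, (hS1s x hx).1, ha x (hSW (hS1s x hx).1) (hS1s x hx).2 u (mem_N.1 hxu)⟩
    · simp only [nb, mem_filter, mem_univ, true_and] at h1
      obtain ⟨h1, s, hs, hsu⟩ := h1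
      exact ⟨hS12 u h2 h1, s, (hS2s s hs).1, hsu⟩
  have hdis : Disjoint (N1 \ (S2 ∪ nb Γ S2)) (nb Γ S2 \ S1) := by
    rw [disjoint_left]
    intro u h1 h2
    exact (mem_sdiff.1 h1).2 (mem_union_right _ (mem_sdiff.1 h2).1)
  have hfin := card_le_card hsub
  rw [card_union_of_disjoint hdis] at hfin
  have f1 := card_sdiff_add_card_inter N1 (S2 ∪ nb Γ S2)
  have f2 := card_sdiff_add_card_inter (nb Γ S2) S1
  omega

theorem det {G H : SimpleGraph V} {D : ℝ} {M k1 : ℕ} {W : Finset V} (hp : Props G H D M)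
    (hk1 : (ES G ∩ ES H).card ≤ k1) (hW : 12 ≤ W.card)
    (hdeg : ∀ v ∈ W, min ((N G v).card : ℝ) D ≤ ((N G v ∩ W).card : ℝ))
    (hB : ∀ Γ ≤ G, (ES Γ).card ≤ k1 + Fintype.card V * ⌈D⌉₊ + Fintype.card V →
      W.card ^ 2 ≤ 32 * (boost Γ).card → ∃ e ∈ boost Γ, e ∈ G.edgeSet) :
    ∀ w ∈ W, ∃ Y ⊆ W, W.card < 4 * Y.card ∧ ∀ y ∈ Y, ∃ m : List V, m.Nodup ∧ m.IsChain G.Adj ∧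
      (∀ v, v ∈ m ↔ v ∈ W) ∧ m.head? = some w ∧ m.getLast? = some y := by
  have hQ : ∀ v, ∃ Q ⊆ N G v ∩ W, Q.card = min ⌈D⌉₊ (N G v ∩ W).card := fun v =>
    exists_subset_card_eq (min_le_right _ _)
  choose Q hQs hQc using hQ
  let Γ0 : SimpleGraph V :=
    { Adj := fun u v => G.Adj u v ∧ u ∈ W ∧ v ∈ W ∧ (H.Adj u v ∨ v ∈ Q u ∨ u ∈ Q v)
      symm := ⟨fun u v ⟨h1, h2, h3, h4⟩ => ⟨h1.symm, h3, h2, by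
        rcases h4 with h | h | h
        · exact Or.inl h.symm
        · exact Or.inr (Or.inr h)
        · exact Or.inr (Or.inl h)⟩⟩
      loopless := ⟨fun u h => h.1.ne rfl⟩ }
  have hΓG : Γ0 ≤ G := fun u v h => h.1
  have hI : InW Γ0 W := fun u v h => h.2.1
  have hQΓ : ∀ v ∈ W, Q v ⊆ N Γ0 v := by
    intro v hv u hu
    have := mem_inter.1 (hQs v hu)
    exact mem_N.2 ⟨mem_N.1 this.1, hv, this.2, Or.inr (Or.inl hu)⟩
  have hE : Exps Γ0 W := by
    refine expand hp hΓG hI ?_ ?_ ?_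
    · intro v hv hs u hvu
      have h1 := hdeg v hv
      rw [min_eq_left hs.le] at h1
      have h2 : (N G v).card ≤ (N G v ∩ W).card := by exact_mod_cast h1
      have h3 : N G v ∩ W = N G v := eq_of_subset_of_card_le inter_subset_left h2
      have h4 : (N G v).card ≤ ⌈D⌉₊ := by
        have := hs.le.trans (Nat.le_ceil D); exact_mod_cast this
      have h5 : Q v = N G v := by
        rw [← h3]
        apply eq_of_subset_of_card_le (hQs v)
        rw [hQc, h3, min_eq_right h4]
      exact mem_N.1 (hQΓ v hv (by rw [h5]; exact mem_N.2 hvu))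
    · intro v hv hs
      have h1 := hdeg v hv
      rw [min_eq_right hs] at h1
      have h2 : ⌈D⌉₊ ≤ (N G v ∩ W).card := Nat.ceil_le.2 h1
      have h3 := card_le_card (hQΓ v hv)
      rw [hQc, min_eq_left h2] at h3
      exact Nat.ceil_le.1 h3
    · intro a ha b hb h1 h2
      exact ⟨h1, ha, hb, Or.inl h2⟩
  have hcard : (ES Γ0).card ≤ k1 + Fintype.card V * ⌈D⌉₊ := by
    have hsub : ES Γ0 ⊆ (ES G ∩ ES H) ∪ univ.biUnion (fun v => (Q v).image (fun u => s(v,u))) := by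
      intro e he
      rw [mem_ES] at he
      induction e using Sym2.ind with
      | _ u v =>
        obtain ⟨h1, h2, h3, h4⟩ := he
        rw [mem_union, mem_inter, mem_ES, mem_ES, mem_biUnion]
        rcases h4 with h | h | h
        · exact Or.inl ⟨h1, h⟩
        · exact Or.inr ⟨u, mem_univ _, mem_image.2 ⟨v, h, rfl⟩⟩
        · exact Or.inr ⟨v, mem_univ _, mem_image.2 ⟨u, h, Sym2.eq_swap⟩⟩
    refine (card_le_card hsub).trans ((card_union_le _ _).trans (add_le_add hk1 ?_))
    refine (card_biUnion_le_card_mul _ _ ⌈D⌉₊ ?_).trans (by simp)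
    intro v _
    refine card_image_le.trans ?_
    rw [hQc]; exact min_le_left _ _
  obtain ⟨Γ, hΓ, hI', hE', l, y, t, hP, hl, hy, ht, hty⟩ := ham hΓG hI hE hW _ hcard hB
  intro w hw
  exact ham_ends hΓ hE' hP hl hy ht hty hI' hw

end Expand
end HP



set_option linter.unusedSectionVars false
set_option linter.unusedSimpArgs false
set_option linter.unusedVariables false
namespace HP
section HGraph
open scoped Classical
open Finset

/-- label adjacency -/
def ladj {F : Type*} [Field F] (x y : F × F) : Prop := x.2 + y.2 = x.1 * y.1

lemma ladj_symm {F : Type*} [Field F] {x y : F × F} (h : ladj x y) : ladj y x := by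
  unfold ladj at *; rw [add_comm, h, mul_comm]

variable {F : Type*} [Field F] [Fintype F]

lemma ladj_card (x : F × F) : (univ.filter (fun y => ladj x y)).card = Fintype.card F := by
  have : univ.filter (fun y => ladj x y) = univ.image (fun c : F => (c, x.1 * c - x.2)) := by
    ext ⟨c, d⟩
    simp only [mem_filter, mem_univ, true_and, mem_image, Prod.mk.injEq]
    unfold ladj
    constructor
    · intro h; exact ⟨c, rfl, by rw [← h]; ring⟩
    · rintro ⟨c', rfl, rfl⟩; ring
  rw [this, card_image_of_injective, card_univ]
  intro a b h; simp at h; exact h.1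

lemma ladj_common {x x' : F × F} (h : x ≠ x') :
    (univ.filter (fun y => ladj x y ∧ ladj x' y)).card ≤ 1 := by
  rw [card_le_one]
  rintro ⟨c, d⟩ h1 ⟨c', d'⟩ h2
  simp only [mem_filter, mem_univ, true_and] at h1 h2
  unfold ladj at h1 h2
  obtain ⟨a, b⟩ := x
  obtain ⟨a', b'⟩ := x'
  simp only at h1 h2
  have haa : a ≠ a' := by
    rintro rfl
    apply h
    have : b + d = b' + d := by rw [h1.1, h1.2]
    simpa using this
  have e1 : (a - a') * c = b - b' := by linear_combination -h1.1 + h1.2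
  have e2 : (a - a') * c' = b - b' := by linear_combination -h2.1 + h2.2
  have hc : c = c' := mul_left_cancel₀ (sub_ne_zero.2 haa) (e1.trans e2.symm)
  subst hc
  have : d = d' := by linear_combination h1.1 - h2.1
  rw [this]

lemma jumbled (X Y : Finset (F × F)) (h : (Fintype.card F) ^ 3 < X.card * Y.card) :
    ∃ x ∈ X, ∃ y ∈ Y, ladj x y := by
  by_contra hcon
  push Not at hcon
  set q := Fintype.card F with hq
  let g : F × F → F × F → ℝ := fun x y => if ladj x y then 1 else 0
  let f : F × F → ℝ := fun y => ∑ x ∈ X, g x y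
  have h1 : ∑ y, f y = q * X.card := by
    simp only [f]
    rw [sum_comm]
    have : ∀ x ∈ X, ∑ y, g x y = q := by
      intro x _
      simp only [g]
      rw [sum_boole, ladj_card]
    rw [sum_congr rfl this]; simp [mul_comm]
  have h2 : ∑ y, f y ^ 2 ≤ X.card * q + (X.card : ℝ) ^ 2 := by
    have e : ∀ y, f y ^ 2 = ∑ x ∈ X, ∑ x' ∈ X, g x y * g x' y := by
      intro y; rw [sq, sum_mul_sum]
    simp only [e]
    rw [sum_comm]
    have b : ∀ x ∈ X, ∑ y, ∑ x' ∈ X, g x y * g x' y ≤ q + X.card := by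
      intro x hx
      rw [sum_comm]
      calc ∑ x' ∈ X, ∑ y, g x y * g x' y ≤ ∑ x' ∈ X, ((if x' = x then (q:ℝ) else 0) + 1) := by
            apply sum_le_sum
            intro x' _
            have : ∑ y, g x y * g x' y = ((univ.filter (fun y => ladj x y ∧ ladj x' y)).card : ℝ) := by
              rw [← sum_boole]
              apply sum_congr rfl
              intro y _
              simp only [g]
              by_cases h1 : ladj x y <;> by_cases h2 : ladj x' y <;> simp [h1, h2]
            rw [this]
            split_ifs with hxx
            · subst hxx
              simp only [and_self]
              rw [ladj_card, ← hq]; linarith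
            · have := ladj_common (x := x) (x' := x') (Ne.symm hxx)
              rw [zero_add]; exact_mod_cast this
        _ = q + X.card := by
            rw [sum_add_distrib, sum_ite_eq' X x]; simp [hx]
    calc _ ≤ ∑ x ∈ X, ((q:ℝ) + X.card) := sum_le_sum b
      _ = _ := by simp; ring
  have h3 : ∑ y, f y = ∑ y ∈ Yᶜ, f y := by
    rw [← sum_add_sum_compl Y]
    have : ∑ y ∈ Y, f y = 0 := by
      apply sum_eq_zero
      intro y hy
      apply sum_eq_zero
      intro x hx
      simp [g, hcon x hx y hy]
    rw [this, zero_add]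
  have h4 : (∑ y ∈ Yᶜ, f y) ^ 2 ≤ (Yᶜ.card : ℝ) * ∑ y ∈ Yᶜ, f y ^ 2 := sq_sum_le_card_mul_sum_sq
  have h5 : ∑ y ∈ Yᶜ, f y ^ 2 ≤ ∑ y, f y ^ 2 :=
    sum_le_sum_of_subset_of_nonneg (subset_univ _) (fun _ _ _ => sq_nonneg _)
  have h6 : (Yᶜ.card : ℝ) = (q:ℝ) ^ 2 - Y.card := by
    have := card_add_card_compl Y
    rw [Fintype.card_prod, ← hq] at this
    have : ((Y.card + Yᶜ.card : ℕ) : ℝ) = ((q * q : ℕ) : ℝ) := by rw [this]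
    push_cast at this; linarith
  have h7 : (0:ℝ) ≤ (Yᶜ.card : ℝ) := by positivity
  rw [← h3, h1, h6] at h4
  rw [h6] at h7
  have h8 : ((q:ℝ) * X.card) ^ 2 ≤ ((q:ℝ) ^ 2 - Y.card) * (X.card * q + (X.card : ℝ) ^ 2) :=
    h4.trans (mul_le_mul_of_nonneg_left (h5.trans h2) h7)
  have h9 : ((q:ℝ)) ^ 3 < X.card * Y.card := by exact_mod_cast h
  have hX : (0:ℝ) < X.card := by
    rcases Nat.eq_zero_or_pos X.card with h0 | h0
    · rw [h0] at h; simp at h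
    · exact_mod_cast h0
  have hY : (0:ℝ) ≤ Y.card := by positivity
  have hq0 : (0:ℝ) ≤ q := by positivity
  have h10 : (q:ℝ)^2 * X.card ≤ ((q:ℝ) ^ 2 - Y.card) * (q + X.card) := by
    have : (X.card : ℝ) * ((q:ℝ)^2 * X.card) ≤ X.card * (((q:ℝ) ^ 2 - Y.card) * (q + X.card)) := by
      nlinarith
    exact le_of_mul_le_mul_left this hX
  nlinarith [mul_nonneg hq0 hY]

/-- edges between -/
noncomputable def eBet {V : Type*} [Fintype V] (A B : Finset V) : Finset (Sym2 V) :=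
  univ.filter (fun e => ∃ a ∈ A, ∃ b ∈ B, e = s(a, b))

theorem exists_H (γ η : ℝ) (hγ : 0 < γ) (hη : 0 < η) : ∃ c : ℝ, 0 < c ∧ ∃ n0 : ℕ, ∀ n ≥ n0,
    ∃ H : SimpleGraph (Fin n), ((ES H).card : ℝ) ≤ η * n ^ 2 ∧
      ∀ A B : Finset (Fin n), Disjoint A B → γ * n ≤ A.card → γ * n ≤ B.card →
        c * (n:ℝ) ^ 2 ≤ ((ES H ∩ eBet A B).card : ℝ) := by
  obtain ⟨q, hqge, hqp⟩ := Nat.exists_infinite_primes (⌈2 / η⌉₊ + ⌈16 / γ ^ 2⌉₊ + 1)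
  haveI : Fact q.Prime := ⟨hqp⟩
  have hq0 : 0 < q := hqp.pos
  have hq1 : 2 / η ≤ q := (Nat.le_ceil _).trans (by exact_mod_cast (by omega))
  have hq2 : 16 / γ ^ 2 < q := lt_of_le_of_lt (Nat.le_ceil _) (by exact_mod_cast (by omega))
  have hqR : (0:ℝ) < q := by exact_mod_cast hq0
  refine ⟨(γ / (2 * q ^ 2)) ^ 2, by positivity, q ^ 2, ?_⟩
  intro n hn
  have hnR : (q:ℝ) ^ 2 ≤ n := by exact_mod_cast hn
  let F := ZMod q
  have hcF : Fintype.card F = q := ZMod.card q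
  have hcard : Fintype.card (F × F) = q ^ 2 := by
    rw [Fintype.card_prod, hcF, sq]
  let eqv : F × F ≃ Fin (q ^ 2) := Fintype.equivFinOfCardEq hcard
  let lab : Fin n → F × F := fun v => eqv.symm ⟨v % q ^ 2, Nat.mod_lt _ (by positivity)⟩
  have hlab : ∀ u v, lab u = lab v → (u : ℕ) % q ^ 2 = v % q ^ 2 := by
    intro u v h
    have := eqv.symm.injective h
    simpa using this
  let cl : F × F → Finset (Fin n) := fun x => univ.filter (fun v => lab v = x)
  have hcl : ∀ x, ((cl x).card : ℝ) ≤ 2 * n / q ^ 2 := by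
    intro x
    have h1 : (cl x).card ≤ n / q ^ 2 + 1 := by
      calc (cl x).card ≤ (range (n / q ^ 2 + 1)).card := by
            refine card_le_card_of_injOn (fun v => (v : ℕ) / q ^ 2) ?_ ?_
            · intro v _
              simp only [coe_range, Set.mem_Iio]
              have : (v:ℕ) / q ^ 2 ≤ n / q ^ 2 := Nat.div_le_div_right v.2.le
              omega
            · intro u hu v hv huv
              simp only [cl, coe_filter, mem_univ, true_and, Set.mem_setOf_eq] at hu hv
              have h1 := hlab u v (hu.trans hv.symm)
              simp only at huv
              apply Fin.ext
              rw [← Nat.div_add_mod (u:ℕ) (q^2), ← Nat.div_add_mod (v:ℕ) (q^2), huv, h1]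
        _ = _ := by simp
    have h2 : ((n / q ^ 2 : ℕ) : ℝ) ≤ (n:ℝ) / q ^ 2 := by
      have := @Nat.cast_div_le ℝ _ _ _ n (q^2); simpa using this
    have h3 : (1:ℝ) ≤ (n:ℝ) / q ^ 2 := by rw [le_div_iff₀ (by positivity)]; linarith
    have h4 : ((cl x).card : ℝ) ≤ ((n / q ^ 2 : ℕ) : ℝ) + 1 := by exact_mod_cast h1
    calc ((cl x).card : ℝ) ≤ (n:ℝ) / q ^ 2 + (n:ℝ) / q ^ 2 := by linarith
      _ = _ := by ring
  let H : SimpleGraph (Fin n) :=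
    { Adj := fun u v => u ≠ v ∧ ladj (lab u) (lab v)
      symm := ⟨fun u v h => ⟨h.1.symm, ladj_symm h.2⟩⟩
      loopless := ⟨fun u h => h.1 rfl⟩ }
  refine ⟨H, ?_, ?_⟩
  · have hsub : ES H ⊆ univ.biUnion (fun u => (univ.filter (fun v => ladj (lab u) (lab v))).image
        (fun v => s(u,v))) := by
      intro e he
      rw [mem_ES] at he
      induction e using Sym2.ind with
      | _ u v =>
        rw [mem_biUnion]
        exact ⟨u, mem_univ _, mem_image.2 ⟨v, by simpa using he.2, rfl⟩⟩
    have hdeg : ∀ u, ((univ.filter (fun v => ladj (lab u) (lab v))).card : ℝ) ≤ 2 * n / q := by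
      intro u
      have h1 : univ.filter (fun v => ladj (lab u) (lab v)) ⊆
          (univ.filter (fun y => ladj (lab u) y)).biUnion cl := by
        intro v hv
        rw [mem_biUnion]
        exact ⟨lab v, by simpa using hv, by simp [cl]⟩
      have h2 := (card_le_card h1).trans card_biUnion_le
      calc ((univ.filter (fun v => ladj (lab u) (lab v))).card : ℝ)
          ≤ ((∑ y ∈ univ.filter (fun y => ladj (lab u) y), (cl y).card : ℕ) : ℝ) := by exact_mod_cast h2
        _ = ∑ y ∈ univ.filter (fun y => ladj (lab u) y), ((cl y).card : ℝ) := by push_cast; rfl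
        _ ≤ ∑ y ∈ univ.filter (fun y => ladj (lab u) y), 2 * (n:ℝ) / q ^ 2 :=
            sum_le_sum (fun y _ => hcl y)
        _ = 2 * n / q := by
            rw [sum_const, ladj_card, hcF, nsmul_eq_mul]; field_simp
    have h3 := (card_le_card hsub).trans card_biUnion_le
    calc ((ES H).card : ℝ) ≤ ((∑ u : Fin n, ((univ.filter (fun v => ladj (lab u) (lab v))).image
        (fun v => s(u,v))).card : ℕ) : ℝ) := by exact_mod_cast h3
      _ = ∑ u : Fin n, (((univ.filter (fun v => ladj (lab u) (lab v))).image
        (fun v => s(u,v))).card : ℝ) := by push_cast; rfl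
      _ ≤ ∑ u : Fin n, 2 * (n:ℝ) / q := by
          apply sum_le_sum
          intro u _
          exact le_trans (by exact_mod_cast card_image_le) (hdeg u)
      _ = (2 / q) * n ^ 2 := by simp; ring
      _ ≤ η * n ^ 2 := by
          apply mul_le_mul_of_nonneg_right _ (by positivity)
          rw [div_le_iff₀ hqR]
          rw [div_le_iff₀ hη] at hq1
          linarith
  · intro A B hAB hA hB
    have hn0 : (0:ℝ) < n := lt_of_lt_of_le (by positivity) hnR
    set θ : ℝ := γ / (2 * q ^ 2) * n with hθ
    have big : ∀ C : Finset (Fin n), γ * n ≤ C.card →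
        γ * q ^ 2 / 4 ≤ ((univ.filter (fun x => θ ≤ ((C ∩ cl x).card : ℝ))).card : ℝ) := by
      intro C hC
      set X := univ.filter (fun x => θ ≤ ((C ∩ cl x).card : ℝ)) with hX
      have h1 : C ⊆ univ.biUnion (fun x => C ∩ cl x) := by
        intro v hv
        rw [mem_biUnion]
        exact ⟨lab v, mem_univ _, mem_inter.2 ⟨hv, by simp [cl]⟩⟩
      have h2 := (card_le_card h1).trans card_biUnion_le
      have h3 : (C.card : ℝ) ≤ ∑ x : F × F, ((C ∩ cl x).card : ℝ) := by exact_mod_cast h2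
      have h4 : ∀ x : F × F, ((C ∩ cl x).card : ℝ) ≤ (if x ∈ X then 2 * (n:ℝ) / q ^ 2 else 0) + θ := by
        intro x
        split_ifs with hx
        · have : ((C ∩ cl x).card : ℝ) ≤ (cl x).card := by exact_mod_cast card_le_card inter_subset_right
          have := hcl x
          have : 0 ≤ θ := by positivity
          linarith
        · rw [hX, mem_filter] at hx
          simp at hx; linarith
      have h5 : (C.card : ℝ) ≤ X.card * (2 * (n:ℝ) / q ^ 2) + q ^ 2 * θ := by
        refine h3.trans ((sum_le_sum (fun x _ => h4 x)).trans (le_of_eq ?_))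
        rw [sum_add_distrib, sum_const, card_univ, hcard, ← sum_filter]
        simp
      have h6 : (q:ℝ) ^ 2 * θ = γ * n / 2 := by rw [hθ]; field_simp
      rw [h6] at h5
      have h7 : γ * n / 2 ≤ X.card * (2 * (n:ℝ) / q ^ 2) := by linarith
      have h8 : γ * n / 2 = (γ * q ^ 2 / 4) * (2 * (n:ℝ) / q ^ 2) := by field_simp; ring
      rw [h8] at h7
      exact le_of_mul_le_mul_right h7 (by positivity)
    obtain ⟨x, hx, y, hy, hxy⟩ := jumbled (univ.filter (fun x => θ ≤ ((A ∩ cl x).card : ℝ)))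
      (univ.filter (fun x => θ ≤ ((B ∩ cl x).card : ℝ))) (by
        rw [hcF]
        have hA' := big A hA
        have hB' := big B hB
        have h1 := mul_le_mul hA' hB' (by positivity) (by positivity)
        have h2 : (q:ℝ) ^ 3 < (γ * q ^ 2 / 4) * (γ * q ^ 2 / 4) := by
          rw [div_lt_iff₀ (by positivity)] at hq2
          have : (q:ℝ) ^ 3 * 16 < q ^ 3 * (q * γ ^ 2) := mul_lt_mul_of_pos_left hq2 (by positivity)
          nlinarith
        exact_mod_cast h2.trans_le h1)
    simp only [mem_filter, mem_univ, true_and] at hx hy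
    have hsub : ((A ∩ cl x) ×ˢ (B ∩ cl y)).image (fun q => s(q.1, q.2)) ⊆ ES H ∩ eBet A B := by
      intro e he
      rw [mem_image] at he
      obtain ⟨⟨a, b⟩, hab, rfl⟩ := he
      rw [mem_product, mem_inter, mem_inter] at hab
      simp only [cl, mem_filter, mem_univ, true_and] at hab
      obtain ⟨⟨ha, hax⟩, hb, hby⟩ := hab
      rw [mem_inter, mem_ES]
      refine ⟨⟨?_, by rw [hax, hby]; exact hxy⟩, ?_⟩
      swap
      · simp only [eBet, mem_filter, mem_univ, true_and]
        exact ⟨a, ha, b, hb, rfl⟩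
      show a ≠ b
      rintro rfl
      exact disjoint_left.1 hAB ha hb
    have hc := card_le_card hsub
    rw [card_image_of_injOn, card_product] at hc
    · calc (γ / (2 * q ^ 2)) ^ 2 * (n:ℝ) ^ 2 = θ * θ := by rw [hθ]; ring
        _ ≤ ((A ∩ cl x).card : ℝ) * ((B ∩ cl y).card : ℝ) :=
            mul_le_mul hx hy (by positivity) (by positivity)
        _ ≤ _ := by exact_mod_cast hc
    · rintro ⟨a, b⟩ hab ⟨a', b'⟩ hab' h
      simp only [coe_product, Set.mem_prod, mem_coe, mem_inter] at hab hab'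
      simp only [Sym2.eq_iff] at h
      rcases h with ⟨rfl, rfl⟩ | ⟨rfl, rfl⟩
      · rfl
      · exact absurd hab'.2.1 (fun h => disjoint_left.1 hAB hab.1.1 h)

end HGraph
end HP



set_option linter.unusedSectionVars false
set_option linter.unusedSimpArgs false
set_option linter.unusedVariables false
namespace HP
section Bounds
open scoped Classical
open Finset

lemma pexp {p z : ℝ} (h : 0 ≤ 1 - p + p * z) (m : ℕ) :
    (1 - p + p * z) ^ m ≤ Real.exp (-(p * (1 - z) * m)) := by
  have h1 : 1 - p + p * z ≤ Real.exp (-(p * (1 - z))) := by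
    have := Real.add_one_le_exp (-(p * (1 - z)))
    linarith
  calc (1 - p + p * z) ^ m ≤ Real.exp (-(p * (1 - z))) ^ m := pow_le_pow_left₀ h h1 m
    _ = _ := by rw [← Real.exp_nat_mul]; congr 1; ring

lemma pz_nonneg {p z : ℝ} (h0 : 0 ≤ p) (h1 : p ≤ 1) (hz : 0 ≤ z) : 0 ≤ 1 - p + p * z := by
  have := mul_nonneg h0 hz; linarith

/-- edges from X to the outside of F -/
noncomputable def star {n : ℕ} (X F : Finset (Fin n)) : Finset (Sym2 (Fin n)) :=
  (X ×ˢ Fᶜ).image (fun q => s(q.1, q.2))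

lemma star_inj {n : ℕ} {X F : Finset (Fin n)} (h : X ⊆ F) :
    Set.InjOn (fun q : Fin n × Fin n => s(q.1, q.2)) (X ×ˢ Fᶜ : Finset _) := by
  rintro ⟨a, b⟩ hab ⟨a', b'⟩ hab' he
  simp only [coe_product, Set.mem_prod, mem_coe, mem_compl] at hab hab'
  simp only [Sym2.eq_iff] at he
  rcases he with ⟨rfl, rfl⟩ | ⟨rfl, rfl⟩
  · rfl
  · exact absurd (h hab.1) hab'.2

lemma star_card {n : ℕ} {X F : Finset (Fin n)} (h : X ⊆ F) :
    (star X F).card = X.card * (n - F.card) := by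
  rw [star, card_image_of_injOn (star_inj h), card_product, card_compl, Fintype.card_fin]

lemma star_sub {n : ℕ} {X F : Finset (Fin n)} (h : X ⊆ F) : star X F ⊆ EE n := by
  intro e he
  simp only [star, mem_image, mem_product, mem_compl] at he
  obtain ⟨⟨a, b⟩, hab, rfl⟩ := he
  rw [mem_EE, Sym2.mk_isDiag_iff]
  simp only at hab ⊢
  rintro rfl
  exact hab.2 (h hab.1)

lemma star_ES {n : ℕ} {X F : Finset (Fin n)} (h : X ⊆ F) (G : SimpleGraph (Fin n)) :
    (ES G ∩ star X F).card ≤ ∑ x ∈ X, (N G x).card := by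
  rw [← card_sigma]
  have : ES G ∩ star X F ⊆ (X.sigma (N G)).image (fun q => s(q.1, q.2)) := by
    intro e he
    rw [mem_inter, mem_ES] at he
    obtain ⟨he, hs⟩ := he
    simp only [star, mem_image, mem_product, mem_compl] at hs
    obtain ⟨⟨a, b⟩, hab, rfl⟩ := hs
    exact mem_image.2 ⟨⟨a, b⟩, mem_sigma.2 ⟨hab.1, mem_N.2 he⟩, rfl⟩
  exact (card_le_card this).trans card_image_le

lemma mem_eIn {n : ℕ} {U : Finset (Fin n)} {e : Sym2 (Fin n)} :
    e ∈ eIn U ↔ ¬ e.IsDiag ∧ ∀ v ∈ e, v ∈ U := by simp [eIn]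

lemma eIn_sub {n : ℕ} (U : Finset (Fin n)) : eIn U ⊆ EE n := by
  intro e he; rw [mem_EE]; exact (mem_eIn.1 he).1

lemma eIn_card {n : ℕ} (U : Finset (Fin n)) : (eIn U).card ≤ U.card ^ 2 := by
  have : eIn U ⊆ (U ×ˢ U).image (fun q => s(q.1, q.2)) := by
    intro e he
    rw [mem_eIn] at he
    induction e using Sym2.ind with
    | _ u v => exact mem_image.2 ⟨(u, v), mem_product.2 ⟨he.2 _ (by simp), he.2 _ (by simp)⟩, rfl⟩
  refine (card_le_card this).trans (card_image_le.trans ?_)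
  rw [card_product, sq]

lemma lowdeg {n : ℕ} {p : ℝ} (h0 : 0 ≤ p) (h1 : p ≤ 1) {z r : ℝ} (hz : 0 < z) (hz1 : z ≤ 1)
    {F X : Finset (Fin n)} {A : Finset (Sym2 (Fin n))} (hX : X ⊆ F) (hA : A ⊆ eIn F) :
    gnpProb n p (fun G => A ⊆ ES G ∧ ∀ x ∈ X, ((N G x).card : ℝ) ≤ r) ≤
      Real.exp (X.card * r * Real.log (1 / z)) * p ^ A.card *
        Real.exp (-(p * (1 - z) * (X.card * (n - F.card : ℝ)))) := by
  have hFn : F.card ≤ n := by simpa using card_le_univ F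
  refine (tail h0 h1 z (Real.exp (X.card * r * Real.log (1 / z))) hz.le (Real.exp_nonneg _) A
    (star X F) (hA.trans (eIn_sub _)) (star_sub hX) ?_ _ ?_).trans ?_
  · rw [disjoint_left]
    intro e he hs
    have h2 := (mem_eIn.1 (hA he)).2
    simp only [star, mem_image, mem_product, mem_compl] at hs
    obtain ⟨⟨a, b⟩, hab, rfl⟩ := hs
    exact hab.2 (h2 _ (by simp))
  · rintro G ⟨hAG, hd⟩
    refine ⟨hAG, ?_⟩
    have h2 : ((ES G ∩ star X F).card : ℝ) ≤ X.card * r := by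
      have := star_ES hX G
      calc ((ES G ∩ star X F).card : ℝ) ≤ ((∑ x ∈ X, (N G x).card : ℕ) : ℝ) := by exact_mod_cast this
        _ = ∑ x ∈ X, ((N G x).card : ℝ) := by push_cast; rfl
        _ ≤ ∑ x ∈ X, r := sum_le_sum hd
        _ = _ := by simp
    have h3 : z ^ ((ES G ∩ star X F).card) = Real.exp (-((ES G ∩ star X F).card * Real.log (1 / z))) := by
      rw [one_div, Real.log_inv, mul_neg, neg_neg, Real.exp_nat_mul, Real.exp_log hz]
    rw [h3, ← Real.exp_add]
    apply Real.one_le_exp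
    have hl : 0 ≤ Real.log (1 / z) := Real.log_nonneg (by rw [le_div_iff₀ hz]; linarith)
    nlinarith
  · rw [mul_assoc (Real.exp _) (p ^ _)]
    apply mul_le_mul_of_nonneg_left _ (Real.exp_nonneg _)
    apply mul_le_mul_of_nonneg_left _ (by positivity)
    refine (pexp (pz_nonneg h0 h1 hz.le) _).trans (le_of_eq ?_)
    rw [star_card hX]; push_cast [hFn]; ring_nf

lemma bP1 {n : ℕ} {p : ℝ} (h0 : 0 ≤ p) (h1 : p ≤ 1) {z : ℝ} (hz : 0 < z) (hz1 : z ≤ 1) :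
    gnpProb n p (fun G => ¬ ∀ v, 2 ≤ (N G v).card) ≤
      n * (Real.exp (Real.log (1 / z)) * Real.exp (-(p * (1 - z) * (n - 1)))) := by
  refine (gnp_union h0 h1 univ _ (fun v G => (∅ : Finset (Sym2 (Fin n))) ⊆ ES G ∧
    ∀ x ∈ ({v} : Finset (Fin n)), ((N G x).card : ℝ) ≤ 1) ?_).trans ?_
  · intro G hG
    push Not at hG
    obtain ⟨v, hv⟩ := hG
    refine ⟨v, mem_univ _, by simp, ?_⟩
    intro x hx
    rw [mem_singleton] at hx; subst hx
    exact_mod_cast (by omega)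
  · calc _ ≤ ∑ v : Fin n, Real.exp (Real.log (1 / z)) * Real.exp (-(p * (1 - z) * (n - 1))) := by
          apply sum_le_sum
          intro v _
          refine (lowdeg h0 h1 hz hz1 (F := {v}) (X := {v}) (A := ∅) (r := 1) (by simp) (by simp)).trans
            (le_of_eq ?_)
          simp
      _ = _ := by simp

/-- small dense low degree configuration -/
def conf {n : ℕ} (D : ℝ) (f a b : ℕ) (G : SimpleGraph (Fin n)) : Prop :=
  ∃ F : Finset (Fin n), F.card = f ∧ ∃ X ⊆ F, X.card = b ∧ ∃ A ⊆ eIn F, A.card = a ∧ A ⊆ ES G ∧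
    ∀ x ∈ X, ((N G x).card : ℝ) ≤ D

lemma bP2 {n : ℕ} {p : ℝ} (h0 : 0 ≤ p) (h1 : p ≤ 1) {z : ℝ} (hz : 0 < z) (hz1 : z ≤ 1) (D : ℝ)
    (f a b : ℕ) :
    gnpProb n p (conf D f a b) ≤ n ^ f * (2 ^ f * 2 ^ (f ^ 2) * (Real.exp (b * D * Real.log (1 / z)) * p ^ a *
        Real.exp (-(p * (1 - z) * (b * (n - f : ℝ)))))) := by
  set Q : ℝ := (Real.exp (b * D * Real.log (1 / z)) * p ^ a *
        Real.exp (-(p * (1 - z) * (b * (n - f : ℝ))))) with hQ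
  have hQ0 : 0 ≤ Q := by positivity
  refine (gnp_union h0 h1 (powersetCard f univ) _ (fun F G => ∃ X ⊆ F, X.card = b ∧ ∃ A ⊆ eIn F,
    A.card = a ∧ A ⊆ ES G ∧ ∀ x ∈ X, ((N G x).card : ℝ) ≤ D) ?_).trans ?_
  · rintro G ⟨F, hF, h⟩
    exact ⟨F, mem_powersetCard.2 ⟨subset_univ _, hF⟩, h⟩
  calc _ ≤ ∑ F ∈ powersetCard f (univ : Finset (Fin n)), (2 ^ f * 2 ^ (f ^ 2) * Q) := ?_
    _ ≤ _ := by
      rw [sum_const, card_powersetCard, nsmul_eq_mul, card_univ, Fintype.card_fin]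
      apply mul_le_mul_of_nonneg_right _ (by positivity)
      exact_mod_cast Nat.choose_le_pow n f
  apply sum_le_sum
  intro F hF
  have hFc := (mem_powersetCard.1 hF).2
  refine (gnp_union h0 h1 (powersetCard b F ×ˢ powersetCard a (eIn F)) _
    (fun q G => q.2 ⊆ ES G ∧ ∀ x ∈ q.1, ((N G x).card : ℝ) ≤ D) ?_).trans ?_
  · rintro G ⟨X, hX, hXb, A, hA, hAa, h⟩
    exact ⟨(X, A), mem_product.2 ⟨mem_powersetCard.2 ⟨hX, hXb⟩, mem_powersetCard.2 ⟨hA, hAa⟩⟩, h⟩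
  calc _ ≤ ∑ q ∈ powersetCard b F ×ˢ powersetCard a (eIn F), Q := by
        apply sum_le_sum
        rintro ⟨X, A⟩ hq
        rw [mem_product, mem_powersetCard, mem_powersetCard] at hq
        simp only at hq
        refine (lowdeg h0 h1 hz hz1 hq.1.1 hq.2.1).trans (le_of_eq ?_)
        rw [hq.1.2, hq.2.2, hFc]
    _ ≤ _ := by
        rw [sum_const, nsmul_eq_mul]
        apply mul_le_mul_of_nonneg_right _ hQ0
        rw [card_product, card_powersetCard, card_powersetCard, hFc]
        have e1 : f.choose b ≤ 2 ^ f := Nat.choose_le_two_pow f b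
        have e2 : (eIn F).card.choose a ≤ 2 ^ (f ^ 2) := by
          refine (Nat.choose_le_two_pow _ a).trans (Nat.pow_le_pow_right (by norm_num) ?_)
          rw [← hFc]; exact eIn_card F
        exact_mod_cast Nat.mul_le_mul e1 e2

/-- upper tail -/
lemma upper {n : ℕ} {p : ℝ} (h0 : 0 ≤ p) (h1 : p ≤ 1) {l r : ℝ} (hl : 0 ≤ l) (m : ℝ)
    {B : Finset (Sym2 (Fin n))} (hB : B ⊆ EE n) (hm : (B.card : ℝ) ≤ m) :
    gnpProb n p (fun G => r ≤ ((ES G ∩ B).card : ℝ)) ≤ Real.exp (-(l * r) + p * Real.exp l * m) := by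
  refine (tail h0 h1 (Real.exp l) (Real.exp (-(l * r))) (Real.exp_nonneg _) (Real.exp_nonneg _) ∅ B
    (by simp) hB (by simp) _ ?_).trans ?_
  · intro G hG
    refine ⟨by simp, ?_⟩
    rw [← Real.exp_nat_mul, ← Real.exp_add]
    apply Real.one_le_exp
    nlinarith
  · rw [Real.exp_add, card_empty, pow_zero, one_mul]
    apply mul_le_mul_of_nonneg_left _ (Real.exp_nonneg _)
    refine (pexp (pz_nonneg h0 h1 (Real.exp_nonneg _)) _).trans ?_
    apply Real.exp_le_exp.2
    have hb : (0:ℝ) ≤ B.card := by positivity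
    have := mul_nonneg h0 hb
    have := mul_le_mul_of_nonneg_left hm (mul_nonneg h0 (Real.exp_nonneg l))
    nlinarith

lemma bP3 {n : ℕ} {p : ℝ} (h0 : 0 ≤ p) (h1 : p ≤ 1) (D l L : ℝ) (hl : 0 ≤ l) (M : ℕ)
    (hb : ∀ u : ℕ, u ≤ 5 * M → -(l * (D * u / 10)) + p * Real.exp l * (u ^ 2 : ℝ) ≤ -(2 * L * u)) :
    gnpProb n p (fun G => ¬ ∀ U : Finset (Fin n), U.Nonempty → U.card ≤ 5 * M →
      10 * ((ES G ∩ eIn U).card : ℝ) < D * U.card) ≤ Real.exp (n * Real.exp (-(2 * L))) - 1 := by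
  refine (gnp_union h0 h1 ((univ : Finset (Finset (Fin n))).filter (fun U => U.Nonempty ∧ U.card ≤ 5 * M)) _
    (fun U G => D * U.card / 10 ≤ ((ES G ∩ eIn U).card : ℝ)) ?_).trans ?_
  · intro G hG
    push Not at hG
    obtain ⟨U, hU, hU2, h⟩ := hG
    refine ⟨U, by simp [hU, hU2], by linarith⟩
  set x := Real.exp (-(2 * L)) with hx
  have hx0 : 0 < x := Real.exp_pos _
  have hall : ∑ U : Finset (Fin n), x ^ U.card = (x + 1) ^ n := by
    have := Finset.sum_pow_mul_eq_add_pow x 1 (univ : Finset (Fin n))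
    simpa using this
  calc _ ≤ ∑ U ∈ (univ : Finset (Finset (Fin n))).filter (fun U => U.Nonempty ∧ U.card ≤ 5 * M),
        x ^ U.card := by
        apply sum_le_sum
        intro U hU
        simp only [mem_filter, mem_univ, true_and] at hU
        refine (upper h0 h1 hl ((U.card : ℝ) ^ 2) (eIn_sub U) (by exact_mod_cast eIn_card U)).trans ?_
        rw [hx, ← Real.exp_nat_mul]
        apply Real.exp_le_exp.2
        have := hb _ hU.2
        linarith
    _ ≤ ∑ U ∈ (univ : Finset (Finset (Fin n))).erase ∅, x ^ U.card := by
        apply sum_le_sum_of_subset_of_nonneg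
        · intro U hU
          simp only [mem_filter, mem_univ, true_and] at hU
          simp [hU.1.ne_empty]
        · intros; positivity
    _ = (x + 1) ^ n - 1 := by
        rw [← hall, ← Finset.add_sum_erase univ _ (mem_univ (∅ : Finset (Fin n)))]; simp
    _ ≤ _ := by
        have := pow_le_pow_left₀ (by positivity) (Real.add_one_le_exp x) n
        rw [← Real.exp_nat_mul] at this
        linarith

lemma eBet_sub {n : ℕ} (H : SimpleGraph (Fin n)) (A B : Finset (Fin n)) : ES H ∩ eBet A B ⊆ EE n :=
  inter_subset_left.trans (ES_sub H)

lemma bP4 {n : ℕ} {p : ℝ} (h0 : 0 ≤ p) (h1 : p ≤ 1) (γ c : ℝ) (M : ℕ) (H : SimpleGraph (Fin n))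
    (hM : γ * n ≤ M)
    (hH : ∀ A B : Finset (Fin n), Disjoint A B → γ * n ≤ A.card → γ * n ≤ B.card →
        c * (n:ℝ) ^ 2 ≤ ((ES H ∩ eBet A B).card : ℝ)) :
    gnpProb n p (fun G => ¬ ∀ A B : Finset (Fin n), Disjoint A B → M ≤ A.card → M ≤ B.card →
      ∃ a ∈ A, ∃ b ∈ B, G.Adj a b ∧ H.Adj a b) ≤ 4 ^ n * Real.exp (-(p * (c * n ^ 2))) := by
  refine (gnp_union h0 h1 ((univ : Finset (Finset (Fin n) × Finset (Fin n))).filter (fun q =>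
    Disjoint q.1 q.2 ∧ M ≤ q.1.card ∧ M ≤ q.2.card)) _
    (fun q G => ES G ∩ (ES H ∩ eBet q.1 q.2) = ∅) ?_).trans ?_
  · intro G hG
    push Not at hG
    obtain ⟨A, B, hAB, hA, hB, h⟩ := hG
    refine ⟨(A, B), by simp [hAB, hA, hB], ?_⟩
    rw [eq_empty_iff_forall_notMem]
    intro e he
    simp only [mem_inter, mem_ES, eBet, mem_filter, mem_univ, true_and] at he
    obtain ⟨heG, heH, a, ha, b, hb, rfl⟩ := he
    exact h a ha b hb heG heH
  calc _ ≤ ∑ q ∈ (univ : Finset (Finset (Fin n) × Finset (Fin n))).filter (fun q =>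
        Disjoint q.1 q.2 ∧ M ≤ q.1.card ∧ M ≤ q.2.card), Real.exp (-(p * (c * n ^ 2))) := by
        apply sum_le_sum
        rintro ⟨A, B⟩ hq
        simp only [mem_filter, mem_univ, true_and] at hq
        refine (tail h0 h1 0 1 le_rfl zero_le_one ∅ (ES H ∩ eBet A B) (by simp) (eBet_sub _ _ _)
          (by simp) _ ?_).trans ?_
        · intro G hG
          simp only at hG
          refine ⟨by simp, ?_⟩
          rw [hG]; simp
        · rw [card_empty, pow_zero, one_mul, one_mul]
          refine (pexp (pz_nonneg h0 h1 le_rfl) _).trans ?_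
          apply Real.exp_le_exp.2
          have hA : (M:ℝ) ≤ A.card := by exact_mod_cast hq.2.1
          have hB : (M:ℝ) ≤ B.card := by exact_mod_cast hq.2.2
          have := hH A B hq.1 (by linarith) (by linarith)
          have := mul_le_mul_of_nonneg_left this h0
          linarith
    _ ≤ _ := by
        rw [sum_const, nsmul_eq_mul]
        apply mul_le_mul_of_nonneg_right _ (Real.exp_nonneg _)
        have := card_filter_le (univ : Finset (Finset (Fin n) × Finset (Fin n))) (fun q =>
          Disjoint q.1 q.2 ∧ M ≤ q.1.card ∧ M ≤ q.2.card)
        rw [card_univ, Fintype.card_prod, Fintype.card_finset, Fintype.card_fin, ← mul_pow] at this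
        exact_mod_cast this

lemma boost_sub {n : ℕ} (Γ : SimpleGraph (Fin n)) : boost Γ ⊆ EE n := by
  intro e he
  simp only [boost, mem_filter, mem_univ, true_and] at he
  obtain ⟨y, t, l, rfl, _, _, _, h⟩ := he
  rw [mem_EE, Sym2.mk_isDiag_iff]; exact h

lemma bP6 {n : ℕ} {p : ℝ} (h0 : 0 ≤ p) (h1 : p ≤ 1) (x c0 : ℝ) (hx : 0 < x) (hx1 : x ≤ 1) (k : ℕ) :
    gnpProb n p (fun G => ¬ ∀ Γ ≤ G, (ES Γ).card ≤ k → c0 * n ^ 2 ≤ ((boost Γ).card : ℝ) →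
      ∃ e ∈ boost Γ, e ∈ G.edgeSet) ≤
      Real.exp (k * Real.log (1 / x) + p * x * n ^ 2 - p * (c0 * n ^ 2)) := by
  refine (gnp_union h0 h1 ((univ : Finset (SimpleGraph (Fin n))).filter (fun Γ => (ES Γ).card ≤ k ∧
    c0 * n ^ 2 ≤ ((boost Γ).card : ℝ))) _
    (fun Γ G => Γ ≤ G ∧ ∀ e ∈ boost Γ, e ∉ G.edgeSet) ?_).trans ?_
  · intro G hG
    push Not at hG
    obtain ⟨Γ, hΓ, h2, h3, h4⟩ := hG
    exact ⟨Γ, by simp [h2, h3], hΓ, h4⟩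
  have hstep : ∀ Γ ∈ (univ : Finset (SimpleGraph (Fin n))).filter (fun Γ => (ES Γ).card ≤ k ∧
      c0 * n ^ 2 ≤ ((boost Γ).card : ℝ)),
      gnpProb n p (fun G => Γ ≤ G ∧ ∀ e ∈ boost Γ, e ∉ G.edgeSet) ≤
        Real.exp (k * Real.log (1 / x)) * Real.exp (-(p * (c0 * n ^ 2))) * (p * x) ^ (ES Γ).card := by
    intro Γ hΓ
    simp only [mem_filter, mem_univ, true_and] at hΓ
    have hpx : p ^ (ES Γ).card ≤ Real.exp (k * Real.log (1 / x)) * (p * x) ^ (ES Γ).card := by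
      rw [mul_pow, mul_comm, mul_assoc]
      refine le_mul_of_one_le_right (by positivity) ?_
      have : x ^ (ES Γ).card = Real.exp (-((ES Γ).card * Real.log (1 / x))) := by
        rw [one_div, Real.log_inv, mul_neg, neg_neg, Real.exp_nat_mul, Real.exp_log hx]
      rw [this, ← Real.exp_add]
      apply Real.one_le_exp
      have hl : 0 ≤ Real.log (1 / x) := Real.log_nonneg (by rw [le_div_iff₀ hx]; linarith)
      have hk : ((ES Γ).card : ℝ) ≤ k := by exact_mod_cast hΓ.1
      nlinarith
    by_cases hd : Disjoint (ES Γ) (boost Γ)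
    · refine (tail h0 h1 0 1 le_rfl zero_le_one (ES Γ) (boost Γ) (ES_sub _) (boost_sub _) hd _ ?_).trans ?_
      · rintro G ⟨hG1, hG2⟩
        constructor
        · intro e he
          rw [mem_ES] at he ⊢
          exact SimpleGraph.edgeSet_mono hG1 he
        · have : ES G ∩ boost Γ = ∅ := by
            rw [eq_empty_iff_forall_notMem]
            intro e he
            rw [mem_inter, mem_ES] at he
            exact hG2 e he.2 he.1
          rw [this]; simp
      · rw [one_mul]
        have h3 := pexp (pz_nonneg h0 h1 (le_refl (0:ℝ))) (boost Γ).card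
        have h4 : Real.exp (-(p * (1 - 0) * (boost Γ).card)) ≤ Real.exp (-(p * (c0 * n ^ 2))) := by
          apply Real.exp_le_exp.2
          have := mul_le_mul_of_nonneg_left hΓ.2 h0
          linarith
        calc _ ≤ (Real.exp (k * Real.log (1 / x)) * (p * x) ^ (ES Γ).card) * Real.exp (-(p * (c0 * n ^ 2))) :=
              mul_le_mul hpx (h3.trans h4) (pow_nonneg (pz_nonneg h0 h1 le_rfl) _) (by positivity)
          _ = _ := by ring
    · have : gnpProb n p (fun G => Γ ≤ G ∧ ∀ e ∈ boost Γ, e ∉ G.edgeSet) ≤ 0 := by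
        refine (gnp_union h0 h1 (∅ : Finset ℕ) _ (fun _ _ => True) ?_).trans (by simp)
        rintro G ⟨hG1, hG2⟩
        exfalso
        apply hd
        rw [disjoint_left]
        intro e he hb
        rw [mem_ES] at he
        exact hG2 e hb (SimpleGraph.edgeSet_mono hG1 he)
      exact this.trans (by positivity)
  calc _ ≤ ∑ Γ ∈ (univ : Finset (SimpleGraph (Fin n))).filter (fun Γ => (ES Γ).card ≤ k ∧
      c0 * n ^ 2 ≤ ((boost Γ).card : ℝ)), Real.exp (k * Real.log (1 / x)) * Real.exp (-(p * (c0 * n ^ 2))) *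
        (p * x) ^ (ES Γ).card := sum_le_sum hstep
    _ ≤ ∑ Γ : SimpleGraph (Fin n), Real.exp (k * Real.log (1 / x)) * Real.exp (-(p * (c0 * n ^ 2))) *
        (p * x) ^ (ES Γ).card :=
        sum_le_sum_of_subset_of_nonneg (subset_univ _) (by intros; positivity)
    _ = Real.exp (k * Real.log (1 / x)) * Real.exp (-(p * (c0 * n ^ 2))) * (p * x + 1) ^ (n.choose 2) := by
        rw [← mul_sum, sum_graph (fun T => (p * x) ^ T.card)]
        have := Finset.sum_pow_mul_eq_add_pow (p * x) 1 (EE n)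
        rw [card_EE] at this
        rw [← this]; simp
    _ ≤ Real.exp (k * Real.log (1 / x)) * Real.exp (-(p * (c0 * n ^ 2))) * Real.exp (p * x * n ^ 2) := by
        apply mul_le_mul_of_nonneg_left _ (by positivity)
        refine (pow_le_pow_left₀ (by positivity) (Real.add_one_le_exp (p * x)) _).trans ?_
        rw [← Real.exp_nat_mul]
        apply Real.exp_le_exp.2
        have : ((n.choose 2 : ℕ) : ℝ) ≤ (n:ℝ) ^ 2 := by exact_mod_cast Nat.choose_le_pow n 2
        have := mul_le_mul_of_nonneg_right this (mul_nonneg h0 hx.le)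
        linarith
    _ = _ := by rw [← Real.exp_add, ← Real.exp_add]; congr 1; ring

end Bounds
end HP



set_option linter.unusedSectionVars false
set_option linter.unusedSimpArgs false
set_option linter.unusedVariables false
namespace HP
section MkProps
open scoped Classical
open Finset

lemma mem_NN {V : Type*} [Fintype V] {G : SimpleGraph V} {x u a : V} :
    a ∈ N G x ∩ N G u ↔ G.Adj x a ∧ G.Adj u a := by
  rw [mem_inter, mem_N, mem_N]

lemma conf_walk {n : ℕ} {D : ℝ} {G : SimpleGraph (Fin n)} {x y : Fin n}
    (hx : ((N G x).card : ℝ) < D) (hy : ((N G y).card : ℝ) < D) (hxy : x ≠ y)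
    (w : G.Walk x y) (hw : w.length < 5) : ∃ l, 1 ≤ l ∧ l ≤ 4 ∧ conf D (l + 1) l 2 G := by
  obtain ⟨q, hq, hql⟩ : ∃ q : G.Walk x y, q.IsPath ∧ q.length < 5 :=
    ⟨w.bypass, w.bypass_isPath, w.length_bypass_le_length.trans_lt hw⟩
  refine ⟨q.length, ?_, by omega, q.support.toFinset, ?_, {x, y}, ?_, ?_, q.edges.toFinset, ?_, ?_, ?_, ?_⟩
  · rcases Nat.eq_zero_or_pos q.length with h | h
    · exact absurd (SimpleGraph.Walk.eq_of_length_eq_zero h) hxy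
    · exact h
  · rw [List.toFinset_card_of_nodup hq.support_nodup, SimpleGraph.Walk.length_support]
  · intro v hv
    simp only [mem_insert, mem_singleton] at hv
    rcases hv with rfl | rfl <;> simp
  · exact card_pair hxy
  · intro e he
    rw [List.mem_toFinset] at he
    rw [mem_eIn]
    refine ⟨G.not_isDiag_of_mem_edgeSet (q.edges_subset_edgeSet he), ?_⟩
    intro v hv
    rw [List.mem_toFinset]
    exact SimpleGraph.Walk.mem_support_of_mem_edges he hv
  · rw [List.toFinset_card_of_nodup hq.isTrail.edges_nodup, SimpleGraph.Walk.length_edges]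
  · intro e he
    rw [List.mem_toFinset] at he
    exact mem_ES.2 (q.edges_subset_edgeSet he)
  · intro v hv
    simp only [mem_insert, mem_singleton] at hv
    rcases hv with rfl | rfl
    · exact hx.le
    · exact hy.le

lemma conf_tri {n : ℕ} {D : ℝ} {G : SimpleGraph (Fin n)} {x u a : Fin n}
    (hx : ((N G x).card : ℝ) < D) (h1 : G.Adj x u) (h2 : G.Adj x a) (h3 : G.Adj u a) :
    conf D 3 3 1 G := by
  have e1 := h1.ne
  have e2 := h2.ne
  have e3 := h3.ne
  refine ⟨{x, u, a}, ?_, {x}, ?_, ?_, {s(x,u), s(x,a), s(u,a)}, ?_, ?_, ?_, ?_⟩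
  · rw [card_insert_of_notMem, card_pair e3]; simp [e1, e2]
  · simp
  · simp
  · intro e he
    simp only [mem_insert, mem_singleton] at he
    rw [mem_eIn]
    rcases he with rfl | rfl | rfl <;> simp [e1, e2, e3]
  · rw [card_insert_of_notMem, card_pair]
    · simp [e1, e2, e3, Sym2.eq_iff]
    · simp [e1, e2, e3, Sym2.eq_iff]
  · intro e he
    simp only [mem_insert, mem_singleton] at he
    rw [mem_ES]
    rcases he with rfl | rfl | rfl <;> assumption
  · intro v hv
    rw [mem_singleton] at hv; subst hv; exact hx.le

lemma conf_cyc {n : ℕ} {D : ℝ} {G : SimpleGraph (Fin n)} {x u a b : Fin n}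
    (hx : ((N G x).card : ℝ) < D) (hxu : x ≠ u) (hab : a ≠ b) (h1 : G.Adj x a) (h2 : G.Adj x b)
    (h3 : G.Adj u a) (h4 : G.Adj u b) : conf D 4 4 1 G := by
  have e1 := h1.ne
  have e2 := h2.ne
  have e3 := h3.ne
  have e4 := h4.ne
  refine ⟨{x, u, a, b}, ?_, {x}, ?_, ?_, {s(x,a), s(x,b), s(u,a), s(u,b)}, ?_, ?_, ?_, ?_⟩
  · rw [card_insert_of_notMem, card_insert_of_notMem, card_pair hab]
    · simp [e3, e4]
    · simp [e1, e2, hxu]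
  · simp
  · simp
  · intro e he
    simp only [mem_insert, mem_singleton] at he
    rw [mem_eIn]
    rcases he with rfl | rfl | rfl | rfl <;> simp [e1, e2, e3, e4]
  · rw [card_insert_of_notMem, card_insert_of_notMem, card_pair]
    · simp [e1, e2, e3, e4, hab, hxu, Sym2.eq_iff]
    · simp [e1, e2, e3, e4, e1.symm, e2.symm, e3.symm, e4.symm, hab, hab.symm, hxu, hxu.symm, Sym2.eq_iff]
    · simp [e1, e2, e3, e4, e1.symm, e2.symm, e3.symm, e4.symm, hab, hab.symm, hxu, hxu.symm, Sym2.eq_iff]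
  · intro e he
    simp only [mem_insert, mem_singleton] at he
    rw [mem_ES]
    rcases he with rfl | rfl | rfl | rfl <;> assumption
  · intro v hv
    rw [mem_singleton] at hv; subst hv; exact hx.le

lemma mkProps {n : ℕ} {D : ℝ} {M : ℕ} {G H : SimpleGraph (Fin n)}
    (h1 : ∀ v, 2 ≤ (N G v).card)
    (ha : ∀ l, 1 ≤ l → l ≤ 4 → ¬ conf D (l + 1) l 2 G)
    (hb : ¬ conf D 3 3 1 G) (hc : ¬ conf D 4 4 1 G)
    (h3 : ∀ U : Finset (Fin n), U.Nonempty → U.card ≤ 5 * M →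
      10 * ((ES G ∩ eIn U).card : ℝ) < D * U.card)
    (h4 : ∀ A B : Finset (Fin n), Disjoint A B → M ≤ A.card → M ≤ B.card →
      ∃ a ∈ A, ∃ b ∈ B, G.Adj a b ∧ H.Adj a b) : Props G H D M where
  p1 := h1
  p2a := by
    intro x y hx hy hxy w
    by_contra hw
    obtain ⟨l, hl, hl', h⟩ := conf_walk hx hy hxy w (by omega)
    exact ha l hl hl' h
  p2b := by
    intro x u hx hxu
    by_contra hcon
    push Not at hcon
    obtain ⟨a, ha, b, hb, hab⟩ := one_lt_card.1 hcon
    replace ha := mem_NN.1 ha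
    replace hb := mem_NN.1 hb
    exact hc (conf_cyc hx hxu hab ha.1 hb.1 ha.2 hb.2)
  p2c := by
    intro x u hx hxu
    rw [eq_empty_iff_forall_notMem]
    intro a ha
    replace ha := mem_NN.1 ha
    exact hb (conf_tri hx hxu ha.1 ha.2)
  p3 := by
    intro U hU hc
    convert h3 U hU hc
  p4 := h4

end MkProps
end HP



set_option linter.unusedSectionVars false
set_option linter.unusedSimpArgs false
set_option linter.unusedVariables false
namespace HP
section Asym
open scoped Classical
open Finset Filter

/-- negligible events -/
def Neg (p : ℕ → ℝ) (P : ∀ n, SimpleGraph (Fin n) → Prop) : Prop :=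
  Tendsto (fun n => gnpProb n (p n) (P n)) atTop (nhds 0)

/-- regime -/
structure Reg (p : ℕ → ℝ) : Prop where
  h0 : ∀ n, 0 ≤ p n
  h1 : ∀ n, p n ≤ 1
  lo : ∀ᶠ n : ℕ in atTop, Real.log n ≤ n * p n
  hi : ∀ᶠ n : ℕ in atTop, n * p n ≤ 2 * Real.log n

variable {p : ℕ → ℝ}

lemma neg_of (hr : Reg p) {P : ∀ n, SimpleGraph (Fin n) → Prop} (g : ℕ → ℝ)
    (hg : Tendsto g atTop (nhds 0)) (h : ∀ᶠ n in atTop, gnpProb n (p n) (P n) ≤ g n) : Neg p P :=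
  tendsto_of_tendsto_of_tendsto_of_le_of_le' tendsto_const_nhds hg
    (Eventually.of_forall (fun n => gnp_nonneg (hr.h0 n) (hr.h1 n) _)) h

lemma Neg.mono (hr : Reg p) {P Q : ∀ n, SimpleGraph (Fin n) → Prop} (hQ : Neg p Q)
    (h : ∀ᶠ n in atTop, ∀ G, P n G → Q n G) : Neg p P := by
  refine neg_of hr _ hQ ?_
  filter_upwards [h] with n hn
  refine (gnp_union (hr.h0 n) (hr.h1 n) ({0} : Finset ℕ) _ (fun _ => Q n) ?_).trans (by simp)
  intro G hG
  exact ⟨0, by simp, hn G hG⟩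

lemma Neg.or (hr : Reg p) {P Q : ∀ n, SimpleGraph (Fin n) → Prop} (hP : Neg p P) (hQ : Neg p Q) :
    Neg p (fun n G => P n G ∨ Q n G) := by
  refine neg_of hr (fun n => gnpProb n (p n) (P n) + gnpProb n (p n) (Q n))
    (by simpa using Tendsto.add hP hQ) ?_
  filter_upwards with n
  refine (gnp_union (hr.h0 n) (hr.h1 n) (univ : Finset Bool) _
    (fun b => if b then P n else Q n) ?_).trans (by simp)
  rintro G (h | h)
  · exact ⟨true, by simp, by simpa using h⟩
  · exact ⟨false, by simp, by simpa using h⟩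

lemma tlog : Tendsto (fun n : ℕ => Real.log n) atTop atTop :=
  Real.tendsto_log_atTop.comp tendsto_natCast_atTop_atTop

lemma texp {c : ℝ} (hc : 0 < c) : Tendsto (fun n : ℕ => Real.exp (-(c * n))) atTop (nhds 0) := by
  refine Real.tendsto_exp_neg_atTop_nhds_zero.comp ?_
  exact Tendsto.const_mul_atTop hc tendsto_natCast_atTop_atTop

lemma nN1 (hr : Reg p) (hp : Tendsto (fun n : ℕ => n * p n - Real.log n - Real.log (Real.log n))
      atTop atTop) : Neg p (fun n G => ¬ ∀ v, 2 ≤ (N G v).card) := by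
  refine neg_of hr (fun n => Real.exp 3 * Real.exp (-(n * p n - Real.log n - Real.log (Real.log n)))) ?_ ?_
  · simpa using (Real.tendsto_exp_neg_atTop_nhds_zero.comp hp).const_mul (Real.exp 3)
  · filter_upwards [hr.hi, tlog.eventually_ge_atTop 1, eventually_ge_atTop 1] with n hhi hL hn
    have hn0 : (0:ℝ) < n := by exact_mod_cast hn
    set L := Real.log n with hLd
    have hL0 : 0 < L := by linarith
    have hp0 := hr.h0 n
    have hp1 := hr.h1 n
    refine (bP1 hp0 hp1 (z := 1 / L) (by positivity) (by rw [div_le_one hL0]; exact hL)).trans ?_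
    rw [one_div_one_div, ← Real.exp_add, ← Real.exp_add]
    nth_rewrite 1 [← Real.exp_log hn0]
    rw [← Real.exp_add]
    apply Real.exp_le_exp.2
    rw [← hLd]
    have h2 : p n * (n:ℝ) * (1 / L) ≤ 2 := by
      rw [mul_one_div, div_le_iff₀ hL0]; linarith
    have h3 : 0 ≤ p n * (1 / L) := by positivity
    nlinarith

lemma nN2 (hr : Reg p) {δ : ℝ} (hδ : 0 ≤ δ) (hδ1 : δ * Real.log 10 ≤ 1 / 10) (f a b : ℕ) (haf : a ≤ f)
    (hfa : (f:ℝ) - a - 0.8 * b ≤ - 0.6) : Neg p (fun n => conf (δ * Real.log n) f a b) := by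
  set C : ℝ := 2 ^ f * 2 ^ (f ^ 2) * Real.exp (b * f) * (2 / 0.6) ^ a with hC
  refine neg_of hr (fun n => C * ((0.6 * Real.log n) ^ a * Real.exp (-(0.6 * Real.log n)))) ?_ ?_
  · have := (Real.tendsto_pow_mul_exp_neg_atTop_nhds_zero a).comp
      (Tendsto.const_mul_atTop (show (0:ℝ) < 0.6 by norm_num) tlog)
    simpa using this.const_mul C
  · filter_upwards [hr.hi, hr.lo, tlog.eventually_ge_atTop 1, eventually_ge_atTop 1] with n hhi hlo hL hn
    have hn0 : (0:ℝ) < n := by exact_mod_cast hn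
    set L := Real.log n with hLd
    have hL0 : 0 < L := by linarith
    have hp0 := hr.h0 n
    have hp1 := hr.h1 n
    refine (bP2 hp0 hp1 (z := 1 / 10) (by norm_num) (by norm_num) (δ * L) f a b).trans ?_
    rw [one_div_one_div]
    have e1 : (n:ℝ) ^ f * p n ^ a ≤ Real.exp ((f - a) * L) * (2 * L) ^ a := by
      have : (n:ℝ) ^ f * p n ^ a = (n:ℝ) ^ (f - a) * (n * p n) ^ a := by
        rw [mul_pow, ← mul_assoc, ← pow_add, Nat.sub_add_cancel haf]
      rw [this]
      have h2 : (n:ℝ) ^ (f - a) = Real.exp ((f - a) * L) := by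
        rw [← Nat.cast_sub haf, Real.exp_nat_mul, hLd, Real.exp_log hn0]
      rw [h2]
      apply mul_le_mul_of_nonneg_left _ (Real.exp_nonneg _)
      exact pow_le_pow_left₀ (by positivity) hhi a
    have e2 : Real.exp ((f - a) * L) * Real.exp (b * (δ * L) * Real.log 10) *
        Real.exp (-(p n * (1 - 1 / 10) * (b * (n - f : ℝ)))) ≤
        Real.exp (b * f) * Real.exp (-(0.6 * L)) := by
      rw [← Real.exp_add, ← Real.exp_add, ← Real.exp_add]
      apply Real.exp_le_exp.2
      have hb : (0:ℝ) ≤ b := by positivity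
      have hf : (0:ℝ) ≤ f := by positivity
      have i1 := mul_le_mul_of_nonneg_left hδ1 (mul_nonneg hb hL0.le)
      have i2 := mul_le_mul_of_nonneg_left hlo hb
      have i3 := mul_le_mul_of_nonneg_left hp1 (mul_nonneg hb hf)
      have i4 := mul_le_mul_of_nonneg_left hfa hL0.le
      nlinarith
    calc _ = (2 ^ f * 2 ^ (f ^ 2)) * ((n:ℝ) ^ f * p n ^ a) * (Real.exp (b * (δ * L) * Real.log 10) *
        Real.exp (-(p n * (1 - 1 / 10) * (b * (n - f : ℝ))))) := by ring
      _ ≤ (2 ^ f * 2 ^ (f ^ 2)) * (Real.exp ((f - a) * L) * (2 * L) ^ a) *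
        (Real.exp (b * (δ * L) * Real.log 10) *
        Real.exp (-(p n * (1 - 1 / 10) * (b * (n - f : ℝ))))) := by gcongr
      _ = (2 ^ f * 2 ^ (f ^ 2)) * (2 * L) ^ a * (Real.exp ((f - a) * L) *
        Real.exp (b * (δ * L) * Real.log 10) *
        Real.exp (-(p n * (1 - 1 / 10) * (b * (n - f : ℝ))))) := by ring
      _ ≤ (2 ^ f * 2 ^ (f ^ 2)) * (2 * L) ^ a * (Real.exp (b * f) * Real.exp (-(0.6 * L))) := by gcongr
      _ = _ := by
        rw [hC]
        have : (2 * L) ^ a = (2 / 0.6) ^ a * (0.6 * L) ^ a := by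
          rw [← mul_pow]; congr 1; ring
        rw [this]; ring

lemma nN3 (hr : Reg p) {δ : ℝ} (hδ : 0 < δ) (M : ℕ → ℕ)
    (hM : ∀ n, (5 * M n : ℝ) ≤ 1 / (2 * Real.exp (30 / δ)) * n) :
    Neg p (fun n G => ¬ ∀ U : Finset (Fin n), U.Nonempty → U.card ≤ 5 * M n →
      10 * ((ES G ∩ eIn U).card : ℝ) < δ * Real.log n * U.card) := by
  refine neg_of hr (fun n => Real.exp (1 / n) - 1) ?_ ?_
  · have h1 : Tendsto (fun n : ℕ => (1:ℝ) / n) atTop (nhds 0) := tendsto_one_div_atTop_nhds_zero_nat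
    have h2 := (Real.continuous_exp.tendsto 0).comp h1
    simpa using h2.sub_const 1
  · filter_upwards [hr.hi, tlog.eventually_ge_atTop 1, eventually_ge_atTop 1] with n hhi hL hn
    have hn0 : (0:ℝ) < n := by exact_mod_cast hn
    set L := Real.log n with hLd
    have hp0 := hr.h0 n
    have hp1 := hr.h1 n
    refine (bP3 hp0 hp1 (δ * L) (30 / δ) L (by positivity) (M n) ?_).trans (le_of_eq ?_)
    · intro u hu
      set E := Real.exp (30 / δ) with hE
      have hE0 : 0 < E := Real.exp_pos _
      have hu1 : (u:ℝ) ≤ 1 / (2 * E) * n :=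
        le_trans (by exact_mod_cast hu) (hM n)
      have hu0 : (0:ℝ) ≤ u := by positivity
      have i1 : 30 / δ * (δ * L * u / 10) = 3 * L * u := by field_simp; ring
      have i2 : p n * E * (u:ℝ) ^ 2 ≤ L * u := by
        calc p n * E * (u:ℝ) ^ 2 = (p n * E * u) * u := by ring
          _ ≤ (p n * E * u) * (1 / (2 * E) * n) := by gcongr
          _ = (n * p n) * u / 2 := by field_simp
          _ ≤ (2 * L) * u / 2 := by gcongr
          _ = _ := by ring
      rw [i1]; linarith
    · have : (n:ℝ) * Real.exp (-(2 * L)) = 1 / n := by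
        rw [show -(2 * L) = -L + -L by ring, Real.exp_add, Real.exp_neg, hLd, Real.exp_log hn0]
        field_simp
      rw [this]

lemma nN4 (hr : Reg p) {γ c : ℝ} (hc : 0 < c) (M : ℕ → ℕ) (H : ∀ n, SimpleGraph (Fin n))
    (hM : ∀ᶠ n : ℕ in atTop, γ * n ≤ M n)
    (hH : ∀ᶠ n : ℕ in atTop, ∀ A B : Finset (Fin n), Disjoint A B → γ * n ≤ A.card → γ * n ≤ B.card →
        c * (n:ℝ) ^ 2 ≤ ((ES (H n) ∩ eBet A B).card : ℝ)) :
    Neg p (fun n G => ¬ ∀ A B : Finset (Fin n), Disjoint A B → M n ≤ A.card → M n ≤ B.card →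
      ∃ a ∈ A, ∃ b ∈ B, G.Adj a b ∧ (H n).Adj a b) := by
  refine neg_of hr _ (texp one_pos) ?_
  filter_upwards [hr.lo, tlog.eventually_ge_atTop ((Real.log 4 + 1) / c), eventually_ge_atTop 1, hM, hH]
    with n hlo hL hn hMn hHn
  have hn0 : (0:ℝ) < n := by exact_mod_cast hn
  set L := Real.log n with hLd
  have hp0 := hr.h0 n
  have hp1 := hr.h1 n
  refine (bP4 hp0 hp1 γ c (M n) (H n) hMn hHn).trans ?_
  have h4 : (4:ℝ) ^ n = Real.exp (n * Real.log 4) := by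
    rw [Real.exp_nat_mul, Real.exp_log (by norm_num)]
  rw [h4, ← Real.exp_add]
  apply Real.exp_le_exp.2
  rw [div_le_iff₀ hc] at hL
  have i1 := mul_le_mul_of_nonneg_left hL hn0.le
  have i2 := mul_le_mul_of_nonneg_left hlo (mul_nonneg hc.le hn0.le)
  nlinarith

lemma nN5 (hr : Reg p) {κ : ℝ} (hκ : 0 < κ) (H : ∀ n, SimpleGraph (Fin n))
    (hH : ∀ᶠ n : ℕ in atTop, ((ES (H n)).card : ℝ) ≤ κ / (16 * Real.exp 1) * n ^ 2) :
    Neg p (fun n G => κ / 4 * n * Real.log n ≤ ((ES G ∩ ES (H n)).card : ℝ)) := by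
  refine neg_of hr _ (texp (show 0 < κ / 8 by positivity)) ?_
  filter_upwards [hr.hi, tlog.eventually_ge_atTop 1, eventually_ge_atTop 1, hH] with n hhi hL hn hHn
  have hn0 : (0:ℝ) < n := by exact_mod_cast hn
  set L := Real.log n with hLd
  refine (upper (hr.h0 n) (hr.h1 n) zero_le_one _ (ES_sub (H n)) hHn).trans ?_
  apply Real.exp_le_exp.2
  have i1 : p n * Real.exp 1 * (κ / (16 * Real.exp 1) * (n:ℝ) ^ 2) = κ / 16 * n * (n * p n) := by
    have := Real.exp_pos 1
    field_simp
  rw [i1]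
  have i2 := mul_le_mul_of_nonneg_left hhi (show 0 ≤ κ / 16 * n by positivity)
  have i3 := mul_le_mul_of_nonneg_left hL (show 0 ≤ κ / 8 * n by positivity)
  linarith

lemma nN6 (hr : Reg p) {c0 κ : ℝ} (hc : 0 < c0) (hc1 : c0 ≤ 1) (hκ : κ * Real.log (4 / c0) = c0 / 4)
    (k : ℕ → ℕ) (hk : ∀ᶠ n : ℕ in atTop, (k n : ℝ) ≤ κ * n * Real.log n) :
    Neg p (fun n G => ¬ ∀ Γ ≤ G, (ES Γ).card ≤ k n → c0 * n ^ 2 ≤ ((boost Γ).card : ℝ) →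
      ∃ e ∈ boost Γ, e ∈ G.edgeSet) := by
  refine neg_of hr _ (texp (show 0 < c0 / 2 by positivity)) ?_
  filter_upwards [hr.lo, tlog.eventually_ge_atTop 1, eventually_ge_atTop 1, hk] with n hlo hL hn hkn
  have hn0 : (0:ℝ) < n := by exact_mod_cast hn
  set L := Real.log n with hLd
  refine (bP6 (hr.h0 n) (hr.h1 n) (c0 / 4) c0 (by positivity) (by linarith) (k n)).trans ?_
  apply Real.exp_le_exp.2
  have e : 1 / (c0 / 4) = 4 / c0 := by field_simp
  rw [e]
  have hl : 0 ≤ Real.log (4 / c0) := Real.log_nonneg (by rw [le_div_iff₀ hc]; linarith)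
  have i1 := mul_le_mul_of_nonneg_right hkn hl
  have i2 : κ * n * L * Real.log (4 / c0) = c0 / 4 * n * L := by rw [← hκ]; ring
  have i3 := mul_le_mul_of_nonneg_left hlo (show 0 ≤ (3 / 4) * c0 * n by positivity)
  have i4 := mul_le_mul_of_nonneg_left hL (show 0 ≤ c0 / 2 * n by positivity)
  nlinarith

lemma mkReg (hp01 : ∀ n, 0 ≤ p n ∧ p n ≤ 1)
    (hp : Tendsto (fun n : ℕ => n * p n - Real.log n - Real.log (Real.log n)) atTop atTop)
    (hp' : (fun n : ℕ => n * p n - Real.log n - Real.log (Real.log n))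
      =o[atTop] (fun n : ℕ => Real.log (Real.log n))) : Reg p where
  h0 n := (hp01 n).1
  h1 n := (hp01 n).2
  lo := by
    have hll : Tendsto (fun n : ℕ => Real.log (Real.log n)) atTop atTop := Real.tendsto_log_atTop.comp tlog
    filter_upwards [hp.eventually_ge_atTop 0, hll.eventually_ge_atTop 0] with n h1 h2
    linarith
  hi := by
    have hll : Tendsto (fun n : ℕ => Real.log (Real.log n)) atTop atTop := Real.tendsto_log_atTop.comp tlog
    have ho : ∀ᶠ n : ℕ in atTop, Real.log (Real.log n) ≤ 1 / 2 * Real.log n := by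
      have := (Real.isLittleO_log_id_atTop.bound (show (0:ℝ) < 1 / 2 by norm_num))
      filter_upwards [tlog.eventually this, tlog.eventually_ge_atTop 1] with n h hL
      simp only [id, Real.norm_eq_abs] at h
      rw [abs_of_nonneg (show 0 ≤ Real.log n by linarith)] at h
      exact (le_abs_self _).trans h
    filter_upwards [hp'.bound one_pos, hll.eventually_ge_atTop 0, ho] with n h1 h2 h3
    rw [Real.norm_eq_abs, Real.norm_eq_abs, abs_of_nonneg h2, one_mul] at h1
    have := (le_abs_self _).trans h1
    linarith

end Asym
end HP



set_option linter.unusedSectionVars false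
set_option linter.unusedSimpArgs false
set_option linter.unusedVariables false
namespace HP
section Final
open scoped Classical
open Finset Filter

lemma ncard_N {n : ℕ} (G : SimpleGraph (Fin n)) (v : Fin n) : (G.neighborSet v).ncard = (N G v).card := by
  rw [← Set.ncard_coe_finset]; congr 1; ext u; simp [N]

lemma ncard_NW {n : ℕ} (G : SimpleGraph (Fin n)) (v : Fin n) (W : Finset (Fin n)) :
    ({u | u ∈ W ∧ G.Adj v u} : Set (Fin n)).ncard = (N G v ∩ W).card := by
  rw [← Set.ncard_coe_finset]; congr 1; ext u; simp [N, and_comm]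

lemma goodG {n : ℕ} {G H : SimpleGraph (Fin n)} {ε δ : ℝ} {M k1 : ℕ} (hδε : δ ≤ ε) (hn : 120 ≤ n)
    (hp : Props G H (δ * Real.log n) M) (hk1 : (ES G ∩ ES H).card ≤ k1)
    (hB : ∀ Γ ≤ G, (ES Γ).card ≤ k1 + n * ⌈δ * Real.log n⌉₊ + n →
      1 / 3200 * (n:ℝ) ^ 2 ≤ ((boost Γ).card : ℝ) → ∃ e ∈ boost Γ, e ∈ G.edgeSet) :
    ∀ W : Finset (Fin n), (0.1 : ℝ) * n ≤ (W.card : ℝ) →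
        (∀ v ∈ W, min (((G.neighborSet v).ncard : ℝ)) (ε * Real.log n)
          ≤ (({u | u ∈ W ∧ G.Adj v u} : Set (Fin n)).ncard : ℝ)) →
        ∀ w : Fin n, ∀ hw : w ∈ W,
          ∃ Y : Finset (Fin n), ∃ hYW : Y ⊆ W, (n : ℝ) / 40 ≤ (Y.card : ℝ) ∧
            ∀ y : Fin n, ∀ hy : y ∈ Y,
              ∃ P : (G.induce (↑W : Set (Fin n))).Walk
                  ⟨w, Finset.mem_coe.mpr hw⟩ ⟨y, Finset.mem_coe.mpr (hYW hy)⟩,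
                P.IsPath ∧ P.IsHamiltonian := by
  intro W hW hdeg w hw
  have hnR : (120:ℝ) ≤ n := by exact_mod_cast hn
  have hL : 0 ≤ Real.log n := Real.log_natCast_nonneg n
  have hW12 : 12 ≤ W.card := by
    have : (12:ℝ) ≤ W.card := by linarith
    exact_mod_cast this
  obtain ⟨Y, hY, hYc, hYm⟩ := det (k1 := k1) hp (by convert hk1) hW12 (by
    intro v hv
    have := hdeg v hv
    rw [ncard_N, ncard_NW] at this
    have h2 : min ((N G v).card : ℝ) (δ * Real.log n) ≤ min ((N G v).card : ℝ) (ε * Real.log n) :=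
      min_le_min le_rfl (mul_le_mul_of_nonneg_right hδε hL)
    refine (h2.trans this).trans (le_of_eq ?_)
    congr!) (by
    intro Γ hΓ h1 h2
    rw [Fintype.card_fin] at h1
    refine hB Γ hΓ h1 ?_
    have h3 : ((W.card : ℝ)) ^ 2 ≤ 32 * ((boost Γ).card : ℝ) := by exact_mod_cast h2
    nlinarith) w hw
  refine ⟨Y, hY, ?_, ?_⟩
  · have : (W.card : ℝ) < 4 * Y.card := by exact_mod_cast hYc
    linarith
  · intro y hy
    obtain ⟨m, hnd, hc, hm, hh, hl⟩ := hYm y hy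
    exact list_ham G W m w y _ _ hnd hc hm hh hl

end Final
end HP

open HP Filter

theorem many_hamilton_path_endpoints
    (ε : ℝ) (hε : 0 < ε)
    (p : ℕ → ℝ) (hp01 : ∀ n, 0 ≤ p n ∧ p n ≤ 1)
    (hp : Filter.Tendsto
      (fun n : ℕ => n * p n - Real.log n - Real.log (Real.log n))
      Filter.atTop Filter.atTop)
    (hp' : (fun n : ℕ => n * p n - Real.log n - Real.log (Real.log n))
      =o[Filter.atTop] (fun n : ℕ => Real.log (Real.log n))) :
    Filter.Tendsto
      (fun n : ℕ => gnpProb n (p n) (fun G =>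
        ∀ W : Finset (Fin n), (0.1 : ℝ) * n ≤ (W.card : ℝ) →
        (∀ v ∈ W, min (((G.neighborSet v).ncard : ℝ)) (ε * Real.log n)
          ≤ (({u | u ∈ W ∧ G.Adj v u} : Set (Fin n)).ncard : ℝ)) →
        ∀ w : Fin n, ∀ hw : w ∈ W,
          ∃ Y : Finset (Fin n), ∃ hYW : Y ⊆ W, (n : ℝ) / 40 ≤ (Y.card : ℝ) ∧
            ∀ y : Fin n, ∀ hy : y ∈ Y,
              ∃ P : (G.induce (↑W : Set (Fin n))).Walk
                  ⟨w, Finset.mem_coe.mpr hw⟩ ⟨y, Finset.mem_coe.mpr (hYW hy)⟩,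
                P.IsPath ∧ P.IsHamiltonian))
      Filter.atTop (nhds 1) := by

  have hr : Reg p := mkReg hp01 hp hp'
  have hlog : 0 < Real.log (4 / (1 / 3200)) := Real.log_pos (by norm_num)
  have hlog10 : 0 < Real.log 10 := Real.log_pos (by norm_num)
  obtain ⟨κ, hκ0, hκ⟩ : ∃ κ : ℝ, 0 < κ ∧ κ * Real.log (4 / (1 / 3200)) = (1 / 3200) / 4 :=
    ⟨(1 / 3200) / 4 / Real.log (4 / (1 / 3200)), by positivity, by field_simp⟩
  obtain ⟨δ, hδ0, hδε, hδκ, hδ1⟩ : ∃ δ : ℝ, 0 < δ ∧ δ ≤ ε ∧ δ ≤ κ / 8 ∧ δ * Real.log 10 ≤ 1 / 10 := by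
    refine ⟨min ε (min (κ / 8) (1 / 10 / Real.log 10)), by positivity, min_le_left _ _,
      (min_le_right _ _).trans (min_le_left _ _), ?_⟩
    rw [← le_div_iff₀ hlog10]
    exact (min_le_right _ _).trans (min_le_right _ _)
  obtain ⟨γ, hγ0, hγ⟩ : ∃ γ : ℝ, 0 < γ ∧ 5 * γ = 1 / (2 * Real.exp (30 / δ)) :=
    ⟨1 / (2 * Real.exp (30 / δ)) / 5, by positivity, by ring⟩
  obtain ⟨c, hc0, n0, hHex⟩ := exists_H (γ / 2) (κ / (16 * Real.exp 1)) (by positivity) (by positivity)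
  have hHex' : ∀ n, ∃ H : SimpleGraph (Fin n), n0 ≤ n →
      (((ES H).card : ℝ) ≤ κ / (16 * Real.exp 1) * n ^ 2 ∧
      ∀ A B : Finset (Fin n), Disjoint A B → γ / 2 * n ≤ A.card → γ / 2 * n ≤ B.card →
        c * (n:ℝ) ^ 2 ≤ ((ES H ∩ eBet A B).card : ℝ)) := by
    intro n
    by_cases h : n0 ≤ n
    · obtain ⟨H, hH⟩ := hHex n h
      exact ⟨H, fun _ => hH⟩
    · exact ⟨⊥, fun h' => absurd h' h⟩
  choose H hH using hHex'
  have b1 := nN1 hr hp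
  have b21 := nN2 hr hδ0.le hδ1 2 1 2 (by norm_num) (by norm_num)
  have b22 := nN2 hr hδ0.le hδ1 3 2 2 (by norm_num) (by norm_num)
  have b23 := nN2 hr hδ0.le hδ1 4 3 2 (by norm_num) (by norm_num)
  have b24 := nN2 hr hδ0.le hδ1 5 4 2 (by norm_num) (by norm_num)
  have b25 := nN2 hr hδ0.le hδ1 3 3 1 (by norm_num) (by norm_num)
  have b26 := nN2 hr hδ0.le hδ1 4 4 1 (by norm_num) (by norm_num)
  have b3 := nN3 hr hδ0 (fun n => ⌊γ * n⌋₊) (by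
    intro n
    have := Nat.floor_le (show 0 ≤ γ * n by positivity)
    rw [← hγ]; linarith)
  have b4 := nN4 hr (γ := γ / 2) hc0 (fun n => ⌊γ * n⌋₊) H (by
    filter_upwards [tendsto_natCast_atTop_atTop.eventually_ge_atTop (2 / γ)] with n hn
    have := Nat.lt_floor_add_one (γ * n)
    rw [div_le_iff₀ hγ0] at hn
    linarith) (by
    filter_upwards [eventually_ge_atTop n0] with n hn
    convert (hH n hn).2)
  have b5 := nN5 hr hκ0 H (by
    filter_upwards [eventually_ge_atTop n0] with n hn
    exact (hH n hn).1)
  have b6 := nN6 hr (c0 := 1 / 3200) (by norm_num) (by norm_num) hκ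
    (fun n => ⌊κ / 4 * n * Real.log n⌋₊ + n * ⌈δ * Real.log n⌉₊ + n) (by
    filter_upwards [tlog.eventually_ge_atTop (4 / κ)] with n hL
    have hL0 : 0 ≤ Real.log n := Real.log_natCast_nonneg n
    have i1 := Nat.floor_le (show 0 ≤ κ / 4 * n * Real.log n by positivity)
    have i2 := (Nat.ceil_lt_add_one (show 0 ≤ δ * Real.log n by positivity)).le
    have hn0 : (0:ℝ) ≤ n := by positivity
    have i3 := mul_le_mul_of_nonneg_left i2 hn0
    rw [div_le_iff₀ hκ0] at hL
    have i4 := mul_le_mul_of_nonneg_left hL hn0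
    have i5 := mul_le_mul_of_nonneg_right hδκ (mul_nonneg hn0 hL0)
    push_cast
    nlinarith)
  have hall := b1.or hr (b21.or hr (b22.or hr (b23.or hr (b24.or hr (b25.or hr (b26.or hr
    (b3.or hr (b4.or hr (b5.or hr b6)))))))))
  have hneg : Neg p (fun n G => ¬ ∀ W : Finset (Fin n), (0.1 : ℝ) * n ≤ (W.card : ℝ) →
        (∀ v ∈ W, min (((G.neighborSet v).ncard : ℝ)) (ε * Real.log n)
          ≤ (({u | u ∈ W ∧ G.Adj v u} : Set (Fin n)).ncard : ℝ)) →
        ∀ w : Fin n, ∀ hw : w ∈ W,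
          ∃ Y : Finset (Fin n), ∃ hYW : Y ⊆ W, (n : ℝ) / 40 ≤ (Y.card : ℝ) ∧
            ∀ y : Fin n, ∀ hy : y ∈ Y,
              ∃ P : (G.induce (↑W : Set (Fin n))).Walk
                  ⟨w, Finset.mem_coe.mpr hw⟩ ⟨y, Finset.mem_coe.mpr (hYW hy)⟩,
                P.IsPath ∧ P.IsHamiltonian) := by
    refine hall.mono hr ?_
    filter_upwards [eventually_ge_atTop 120] with n hn G hG
    by_contra hcon
    apply hG
    simp only [not_or, not_not] at hcon
    obtain ⟨c1, c21, c22, c23, c24, c25, c26, c3, c4, c5, c6⟩ := hcon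
    refine goodG hδε hn (mkProps c1 ?_ c25 c26 c3 c4) (Nat.le_floor (not_le.1 c5).le) c6
    intro l hl hl'
    interval_cases l <;> assumption
  have hfin : (fun n : ℕ => 1 - gnpProb n (p n) (fun G => ¬ ∀ W : Finset (Fin n), (0.1 : ℝ) * n ≤ (W.card : ℝ) →
        (∀ v ∈ W, min (((G.neighborSet v).ncard : ℝ)) (ε * Real.log n)
          ≤ (({u | u ∈ W ∧ G.Adj v u} : Set (Fin n)).ncard : ℝ)) →
        ∀ w : Fin n, ∀ hw : w ∈ W,
          ∃ Y : Finset (Fin n), ∃ hYW : Y ⊆ W, (n : ℝ) / 40 ≤ (Y.card : ℝ) ∧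
            ∀ y : Fin n, ∀ hy : y ∈ Y,
              ∃ P : (G.induce (↑W : Set (Fin n))).Walk
                  ⟨w, Finset.mem_coe.mpr hw⟩ ⟨y, Finset.mem_coe.mpr (hYW hy)⟩,
                P.IsPath ∧ P.IsHamiltonian)) = _ := funext (fun n => (gnp_compl _).symm)
  rw [← hfin]
  have := Filter.Tendsto.const_sub 1 hneg
  simpa using this
end

section
/- Let r ≥ 2 be an integer and let G be a graph on n vertices, where n is divisible by r + 1. Then there exists an r-colouring of the edges of G such that every monochromatic matching of G has size at most n/(r+1), and consequently every Hamilton cycle of G contains at most 2n/(r+1) edges of any single colour. -/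
theorem tc_core {V : Type*} [Fintype V] [DecidableEq V] (w : V → ℕ) (m d : ℕ)
    (hw : ∑ v, w v ≤ 2 * m) (S : Finset (Sym2 V))
    (hS : ∀ a b, s(a, b) ∈ S → a ≠ b ∧ 2 ≤ w a + w b)
    (hd : ∀ v, (S.filter (fun e => v ∈ e)).card ≤ d) : S.card ≤ d * m := by
  have h1 : ∀ e ∈ S, 2 ≤ ∑ v, if v ∈ e then w v else 0 := by
    intro e
    induction e using Sym2.ind with
    | _ a b =>
      intro he
      obtain ⟨hab, h2⟩ := hS a b he
      rw [← Finset.sum_filter]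
      have : (Finset.univ.filter (fun v => v ∈ s(a, b))) = {a, b} := by
        ext v; simp
      rw [this, Finset.sum_pair hab]
      exact h2
  have h2 : S.card * 2 ≤ ∑ e ∈ S, ∑ v, if v ∈ e then w v else 0 := by
    simpa using Finset.card_nsmul_le_sum S _ 2 h1
  rw [Finset.sum_comm] at h2
  have h3 : ∑ v, ∑ e ∈ S, (if v ∈ e then w v else 0) ≤ ∑ v, d * w v := by
    apply Finset.sum_le_sum
    intro v _
    rw [← Finset.sum_filter, Finset.sum_const, smul_eq_mul]
    exact Nat.mul_le_mul_right _ (hd v)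
  rw [← Finset.mul_sum] at h3
  have := Nat.mul_le_mul_left d hw
  have h4 : d * (2 * m) = 2 * (d * m) := by ring
  omega

theorem tc_label (V : Type*) [Fintype V] [DecidableEq V] (m r : ℕ) (hr : 2 ≤ r)
    (hV : Fintype.card V = (r + 1) * m) :
    ∃ l : V → Fin r, ∀ i : Fin r, ∃ w : V → ℕ, ∑ v, w v ≤ 2 * m ∧
      ∀ a b, min (l a) (l b) = i → 2 ≤ w a + w b := by
  let e := Fintype.equivFin V
  have hlt : ∀ v, (e v : ℕ) < (r + 1) * m := fun v => hV ▸ (e v).2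
  let l : V → Fin r := fun v => ⟨min ((e v : ℕ) / m) (r - 1), by omega⟩
  have hcard : ∀ (P : V → Prop) [DecidablePred P] (x y : ℕ),
      (∀ v, P v → x ≤ (e v : ℕ) ∧ (e v : ℕ) < y) →
      (Finset.univ.filter P).card ≤ y - x := by
    intro P _ x y h
    rw [← Nat.card_Ico]
    apply Finset.card_le_card_of_injOn (fun v => (e v : ℕ))
    · intro v hv
      simpa using h v (by simpa using hv)
    · intro a _ b _ hab
      exact e.injective (Fin.ext hab)
  refine ⟨l, fun i => ?_⟩
  by_cases hi : (i : ℕ) < r - 1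
  · refine ⟨fun v => if l v = i then 2 else 0, ?_, ?_⟩
    · rw [← Finset.sum_filter, Finset.sum_const, smul_eq_mul]
      have := hcard (fun v => l v = i) (i * m) ((i + 1) * m) (by
        intro v hv
        have hm : 0 < m := by
          rcases Nat.eq_zero_or_pos m with h | h
          · have := hlt v; simp [h] at this
          · exact h
        have h0 : min ((e v : ℕ) / m) (r - 1) = i := congrArg Fin.val hv
        have h1 : (e v : ℕ) / m = i := by omega
        rw [← h1]
        exact ⟨Nat.div_mul_le_self _ _, (Nat.div_lt_iff_lt_mul hm).1 (Nat.lt_succ_self _)⟩)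
      rw [add_mul, one_mul, Nat.add_sub_cancel_left] at this
      omega
    · intro a b hab
      rcases min_choice (l a) (l b) with h | h <;> rw [h] at hab <;> simp [hab]
  · refine ⟨fun v => if l v = i then 1 else 0, ?_, ?_⟩
    · rw [← Finset.sum_filter, Finset.sum_const, smul_eq_mul, mul_one]
      have := hcard (fun v => l v = i) ((r - 1) * m) ((r + 1) * m) (by
        intro v hv
        refine ⟨?_, hlt v⟩
        have h0 : min ((e v : ℕ) / m) (r - 1) = i := congrArg Fin.val hv
        have h1 : r - 1 ≤ (e v : ℕ) / m := by omega
        exact (Nat.mul_le_mul_right m h1).trans (Nat.div_mul_le_self _ _))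
      rw [← Nat.sub_mul] at this
      rwa [show r + 1 - (r - 1) = 2 by omega] at this
    · intro a b hab
      have ha : i ≤ l a := hab ▸ min_le_left _ _
      have hb : i ≤ l b := hab ▸ min_le_right _ _
      have ha' : l a = i := by
        apply Fin.ext; have := (l a).2; have : (i : ℕ) ≤ l a := ha; omega
      have hb' : l b = i := by
        apply Fin.ext; have := (l b).2; have : (i : ℕ) ≤ l b := hb; omega
      simp [ha', hb']

theorem tc_deg {V : Type*} [Fintype V] [DecidableEq V] {G : SimpleGraph V} (H : G.Subgraph)
    (S : Finset (Sym2 V)) (hS : ∀ e ∈ S, e ∈ H.edgeSet) (v : V) :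
    (S.filter (fun e => v ∈ e)).card ≤ (H.neighborSet v).ncard := by
  classical
  rw [← Set.ncard_coe_finset]
  refine (Set.ncard_le_ncard ?_ (Set.toFinite ((fun u => s(v, u)) '' H.neighborSet v))).trans
    (Set.ncard_image_le (Set.toFinite _))
  intro e he
  simp only [Finset.coe_filter, Set.mem_ofPred_eq] at he
  obtain ⟨u, rfl⟩ := he.2
  exact ⟨u, hS _ he.1, rfl⟩

/-- **Proposition (tightness construction).**
Let `r ≥ 2` and let `G` be a graph on `n` vertices with `(r+1) ∣ n`. Then there is
an `r`-colouring of the edges of `G` in which every monochromatic matching has size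
at most `n/(r+1)`, and consequently every Hamilton cycle contains at most
`2n/(r+1)` edges of any single colour. -/
theorem tightness_colouring
    {V : Type*} [Fintype V] [DecidableEq V] (G : SimpleGraph V) (n : ℕ)
    (hn : Fintype.card V = n) (r : ℕ) (hr : 2 ≤ r) (hdvd : (r + 1) ∣ n) :
    ∃ c : Sym2 V → Fin r,
      (∀ i : Fin r, ∀ M : G.Subgraph, M.IsMatching → (∀ e ∈ M.edgeSet, c e = i) →
        (M.edgeSet.ncard : ℝ) ≤ (n : ℝ) / (r + 1)) ∧
      (∀ i : Fin r, ∀ (v : V) (w : G.Walk v v), w.IsHamiltonianCycle →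
        ((w.edges.filter (fun e => c e = i)).length : ℝ) ≤ 2 * n / (r + 1)) := by
  classical
  obtain ⟨m, rfl⟩ := hdvd
  obtain ⟨l, hl⟩ := tc_label V m r hr hn
  have hr0 : (r : ℝ) + 1 ≠ 0 := by positivity
  refine ⟨Sym2.lift ⟨fun a b => min (l a) (l b), fun a b => min_comm _ _⟩, ?_, ?_⟩
  · intro i M hM hc
    obtain ⟨w, hw, hw2⟩ := hl i
    have := tc_core w m 1 hw M.edgeSet.toFinset
      (fun a b hab => by
        rw [Set.mem_toFinset] at hab
        exact ⟨(M.adj_sub hab).ne, hw2 a b (hc _ hab)⟩)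
      (fun v => (tc_deg M _ (fun e he => by simpa using he) v).trans (by
        rw [Set.ncard_le_one (Set.toFinite _)]
        intro a ha b hb
        exact (hM (M.edge_vert ha)).unique ha hb))
    rw [← Set.ncard_eq_toFinset_card', one_mul] at this
    rw [show (((r + 1) * m : ℕ) : ℝ) / (r + 1) = m by push_cast; field_simp]
    exact_mod_cast this
  · intro i v p hp
    obtain ⟨w, hw, hw2⟩ := hl i
    have hnd := (hp.isCycle.isTrail.edges_nodup).filter
      (fun e => decide (Sym2.lift ⟨fun a b => min (l a) (l b), fun a b => min_comm _ _⟩ e = i))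
    have := tc_core w m 2 hw (List.toFinset (p.edges.filter
      (fun e => decide (Sym2.lift ⟨fun a b => min (l a) (l b), fun a b => min_comm _ _⟩ e = i))))
      (fun a b hab => by
        rw [List.mem_toFinset, List.mem_filter] at hab
        exact ⟨(p.adj_of_mem_edges hab.1).ne, hw2 a b (of_decide_eq_true hab.2)⟩)
      (fun u => (tc_deg p.toSubgraph _ (fun e he => by
        rw [List.mem_toFinset, List.mem_filter] at he
        exact (p.mem_edges_toSubgraph).2 he.1) u).trans (by
        exact (hp.isCycle.ncard_neighborSet_toSubgraph_eq_two (hp.mem_support u)).le))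
    rw [List.toFinset_card_of_nodup hnd] at this
    rw [show 2 * (((r + 1) * m : ℕ) : ℝ) / (r + 1) = (2 * m : ℕ) by push_cast; field_simp]
    exact_mod_cast this
end
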